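/- For every integer n ≥ 2, one has (1 − (ln n)/(5n))·E_n^* ≤ B_n ≤ E_n^*. -/

import Mathlib

/-- Principal branch of the Lambert W function on `[0, ∞)`: for `x ≥ 0`,
`lambertW x` is the unique `y ≥ 0` with `y * exp y = x`. -/
noncomputable def lambertW (x : ℝ) : ℝ := Function.invFun (fun y : ℝ => y * Real.exp y) x

/-- Bell numbers: `Bell 0 = 1` and `Bell (n+1) = ∑_{k=0}^{n} C(n,k) * Bell k`. -/
def Bell : ℕ → ℕ
  | 0 => 1
  | n + 1 => ∑ k ∈ (Finset.range (n + 1)).attach, (n.choose k.1) * Bell k.1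
decreasing_by exact Finset.mem_range.mp k.2

/-- `E* n = exp(e^{W(n)} + n W(n) - (n+1)) / sqrt(1 + W(n))`. -/
noncomputable def Estar (n : ℕ) : ℝ :=
  Real.exp (Real.exp (lambertW n) + n * lambertW n - (n + 1)) / Real.sqrt (1 + lambertW n)

/-!
Cauchy's formula for the exponential generating function `exp (exp z - 1)` on the circle of radius
`w = lambertW n`, the saddle point, expresses `Bell n` as an explicit factor times
`∫ t in -π..π, Re exp (exp (w * exp (i t)) - exp w - i n t)`. The exponent has Taylor coefficients
`exp w * touchard w k / k!`, so near `0` the integrand is squeezed between two Gaussians multiplied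
by even polynomials, whose integrals are elementary; away from `0` it is doubly exponentially small.
With Stirling's formula for `n!`, the leading term is exactly `Estar n`. The correction of
order `1 / n` to the integral is at most `-1 / (12 n)`, which absorbs the error of Stirling's
formula, and at least `-(w + 3 / 2) / (5 n)`, which is above `-log n / (5 n)` because
`log n = w + log w`. These estimates hold once `w ≥ 9 / 2`, hence for `n ≥ 406`. The remaining `n`
are checked by a fixed-point computation with directed rounding: Newton's iteration encloses
`lambertW n` in a short interval, and repeated squaring encloses the exponentials.
-/

section LambertW

variable {x a : ℝ}

theorem lambertW_mul_exp (hx : 0 ≤ x) : lambertW x * Real.exp (lambertW x) = x := by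
  have hcont : ContinuousOn (fun y : ℝ ↦ y * Real.exp y) (Set.Icc 0 x) := by fun_prop
  have hmem : x ∈ Set.Icc (0 * Real.exp 0) (x * Real.exp x) :=
    ⟨by simpa using hx, le_mul_of_one_le_right hx (Real.one_le_exp hx)⟩
  obtain ⟨y, -, hy⟩ := intermediate_value_Icc hx hcont hmem
  exact Function.invFun_eq (f := fun y : ℝ ↦ y * Real.exp y) ⟨y, hy⟩

theorem lambertW_pos (hx : 0 < x) : 0 < lambertW x :=
  pos_of_mul_pos_left ((lambertW_mul_exp hx.le).symm ▸ hx) (Real.exp_pos _).le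

theorem mul_exp_lt_mul_exp {y z : ℝ} (hy : 0 ≤ y) (h : y < z) :
    y * Real.exp y < z * Real.exp z :=
  mul_lt_mul h (Real.exp_le_exp.2 h.le) (Real.exp_pos _) (hy.trans h.le)

theorem le_lambertW (hx : 0 < x) (h : a * Real.exp a ≤ x) : a ≤ lambertW x := by
  by_contra! hlt
  have := mul_exp_lt_mul_exp (lambertW_pos hx).le hlt
  linarith [lambertW_mul_exp hx.le]

theorem lambertW_le (hx : 0 ≤ x) (ha : 0 ≤ a) (h : x ≤ a * Real.exp a) : lambertW x ≤ a := by
  by_contra! hlt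
  have := mul_exp_lt_mul_exp ha hlt
  linarith [lambertW_mul_exp hx]

theorem exp_lambertW (hx : 0 < x) : Real.exp (lambertW x) = x / lambertW x := by
  rw [eq_div_iff (lambertW_pos hx).ne', mul_comm, lambertW_mul_exp hx.le]

theorem log_eq_lambertW_add_log (hx : 0 < x) :
    Real.log x = lambertW x + Real.log (lambertW x) := by
  conv_lhs => rw [← lambertW_mul_exp hx.le]
  rw [Real.log_mul (lambertW_pos hx).ne' (Real.exp_pos _).ne', Real.log_exp, add_comm]

theorem three_fourths_mul_lambertW_le_log (hx : 2 ≤ x) : 3 / 4 * lambertW x ≤ Real.log x := by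
  have hx0 : 0 < x := by linarith
  have hexp : Real.exp (5 / 6) ≤ 12 / 5 := by
    have hpow : Real.exp (5 / 6) ^ 6 = Real.exp 1 ^ 5 := by
      rw [← Real.exp_nat_mul, ← Real.exp_nat_mul]; norm_num
    have hlt : Real.exp 1 ^ 5 ≤ 2.7182818286 ^ 5 := by
      gcongr; exact Real.exp_one_lt_d9.le
    refine le_of_pow_le_pow_left₀ (n := 6) (by norm_num) (by norm_num) ?_
    rw [hpow]
    exact hlt.trans (by norm_num)
  have hW : 5 / 6 ≤ lambertW x := le_lambertW hx0 (by linarith)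
  have hlog : 1 - (lambertW x)⁻¹ ≤ Real.log (lambertW x) :=
    Real.one_sub_inv_le_log_of_pos (lambertW_pos hx0)
  have hquad : (lambertW x)⁻¹ ≤ 1 + lambertW x / 4 := by
    rw [inv_le_iff_one_le_mul₀ (lambertW_pos hx0)]
    nlinarith
  rw [log_eq_lambertW_add_log hx0]
  linarith

end LambertW

theorem Bell_succ (n : ℕ) : Bell (n + 1) = ∑ k ∈ Finset.range (n + 1), n.choose k * Bell k := by
  rw [Bell, Finset.sum_attach (Finset.range (n + 1)) fun k ↦ n.choose k * Bell k]

section CauchyIntegral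

open Complex MeasureTheory

theorem iteratedDeriv_exp_exp_sub_one (n : ℕ) :
    iteratedDeriv n (fun z : ℂ ↦ exp (exp z - 1)) 0 = Bell n := by
  induction n using Nat.strong_induction_on with
  | _ n ih =>
    cases n with
    | zero => simp [Bell]
    | succ n =>
      have hderiv : deriv (fun z : ℂ ↦ exp (exp z - 1)) = fun z ↦ exp (exp z - 1) * exp z :=
        funext fun z ↦ ((hasDerivAt_exp z).sub_const 1).cexp.deriv
      have hsmooth : ContDiff ℂ n fun z : ℂ ↦ exp (exp z - 1) := by fun_prop
      have hexp (m : ℕ) : iteratedDeriv m exp 0 = 1 := by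
        simp [iteratedDeriv_eq_iterate, iter_deriv_exp]
      rw [iteratedDeriv_succ', hderiv,
        iteratedDeriv_fun_mul hsmooth.contDiffAt contDiff_exp.contDiffAt, Bell_succ, Nat.cast_sum]
      refine Finset.sum_congr rfl fun k hk ↦ ?_
      rw [ih k (Finset.mem_range.1 hk), hexp, mul_one, Nat.cast_mul]

theorem integral_circle_mul_exp_neg {f : ℂ → ℂ} (hf : Differentiable ℂ f) {r : ℝ} (hr : 0 < r)
    (n : ℕ) : ∫ t in -Real.pi..Real.pi, f (r * exp (t * I)) * exp (-(n * t * I)) =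
      2 * Real.pi * r ^ n / n.factorial * iteratedDeriv n f 0 := by
  have hr' : (r : ℂ) ≠ 0 := by exact_mod_cast hr.ne'
  have hper : Function.Periodic (fun t : ℝ ↦ f (r * exp (t * I)) * exp (-(n * t * I)))
      (2 * Real.pi) := fun t ↦ by
    have hexp : exp ((t + 2 * Real.pi : ℝ) * I) = exp (t * I) := by
      push_cast
      rw [add_mul, exp_add, exp_two_pi_mul_I, mul_one]
    have hexp_n : exp (-(n * (t + 2 * Real.pi : ℝ) * I)) = exp (-(n * t * I)) :=
      exp_eq_exp_iff_exists_int.2 ⟨-n, by push_cast; ring⟩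
    simp only [hexp, hexp_n]
  have hintegrand (t : ℝ) : deriv (circleMap 0 r) t •
      ((1 / (circleMap 0 r t - 0) ^ (n + 1)) • f (circleMap 0 r t)) =
      I / r ^ n * (f (r * exp (t * I)) * exp (-(n * t * I))) := by
    have := exp_ne_zero (t * I)
    rw [deriv_circleMap, mul_assoc, exp_neg, exp_nat_mul]
    simp only [circleMap, zero_add, sub_zero, smul_eq_mul]
    field_simp
    ring
  have hcauchy := hf.diffContOnCl.circleIntegral_one_div_sub_center_pow_smul (c := 0) hr n
  simp only [circleIntegral, hintegrand] at hcauchy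
  have hshift := hper.intervalIntegral_add_eq 0 (-Real.pi)
  rw [zero_add, show -Real.pi + 2 * Real.pi = Real.pi by ring] at hshift
  rw [intervalIntegral.integral_const_mul, hshift, smul_eq_mul] at hcauchy
  generalize (∫ t in -Real.pi..Real.pi, f (r * exp (t * I)) * exp (-(n * t * I))) = J at hcauchy ⊢
  have hI := I_ne_zero
  field_simp at hcauchy ⊢
  linear_combination hcauchy

/-- Up to the factor `exp (exp w - 1)`, the real part of `exp (exp z - 1) * exp (-i ν t)` at the
point `z = w * exp (i t)` of the circle of radius `w`. -/
noncomputable def saddleKernel (ν w t : ℝ) : ℝ :=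
  Real.exp ((exp (w * exp (t * I))).re - Real.exp w) *
    Real.cos ((exp (w * exp (t * I))).im - ν * t)

theorem continuous_saddleKernel (ν w : ℝ) : Continuous (saddleKernel ν w) := by
  unfold saddleKernel; fun_prop

theorem re_exp_exp_sub_one_mul_exp_neg (w t : ℝ) (n : ℕ) :
    (exp (exp (w * exp (t * I)) - 1) * exp (-(n * t * I))).re =
      Real.exp (Real.exp w - 1) * saddleKernel n w t := by
  rw [← exp_add, exp_re, saddleKernel, ← mul_assoc, ← Real.exp_add]
  congr 2
  · simp
  · simp [sub_eq_add_neg]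

theorem Bell_eq_integral_saddleKernel {w : ℝ} (hw : 0 < w) (n : ℕ) :
    (Bell n : ℝ) = n.factorial / w ^ n * Real.exp (Real.exp w - 1) / (2 * Real.pi) *
      ∫ t in -Real.pi..Real.pi, saddleKernel n w t := by
  have hdiff : Differentiable ℂ fun z : ℂ ↦ exp (exp z - 1) := by fun_prop
  have hcauchy := integral_circle_mul_exp_neg hdiff hw n
  have hint : IntervalIntegrable
      (fun t : ℝ ↦ exp (exp (w * exp (t * I)) - 1) * exp (-(n * t * I))) volume
      (-Real.pi) Real.pi := by
    apply Continuous.intervalIntegrable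
    fun_prop
  have hre := reCLM.intervalIntegral_comp_comm hint
  simp only [reCLM_apply, re_exp_exp_sub_one_mul_exp_neg] at hre
  rw [intervalIntegral.integral_const_mul, hcauchy, iteratedDeriv_exp_exp_sub_one,
    show 2 * Real.pi * (w : ℂ) ^ n / n.factorial * Bell n =
      ((2 * Real.pi * w ^ n / n.factorial * Bell n : ℝ) : ℂ) by push_cast; rfl, ofReal_re] at hre
  rw [mul_div_right_comm, mul_assoc, hre]
  field_simp

end CauchyIntegral

section TrigTaylor

variable {x : ℝ}

theorem nonneg_of_hasDerivAt_of_nonneg {f f' : ℝ → ℝ} (hf : ∀ x, HasDerivAt f (f' x) x)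
    (hzero : f 0 = 0) (hf' : ∀ x, 0 ≤ x → 0 ≤ f' x) (hx : 0 ≤ x) : 0 ≤ f x := by
  have hmono : MonotoneOn f (Set.Ici 0) :=
    monotoneOn_of_deriv_nonneg (convex_Ici 0) (fun y _ ↦ (hf y).continuousAt.continuousWithinAt)
      (fun y _ ↦ (hf y).differentiableAt.differentiableWithinAt) fun y hy ↦ by
        rw [(hf y).deriv]
        exact hf' y (interior_subset hy)
  simpa [hzero] using hmono Set.self_mem_Ici hx hx

theorem cos_le_one_sub_sq_add_pow_four (hx : 0 ≤ x) :
    Real.cos x ≤ 1 - x ^ 2 / 2 + x ^ 4 / 24 := by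
  rw [← sub_nonneg]
  refine nonneg_of_hasDerivAt_of_nonneg (f := fun x ↦ 1 - x ^ 2 / 2 + x ^ 4 / 24 - Real.cos x)
    (f' := fun x ↦ Real.sin x - (x - x ^ 3 / 6)) (fun x ↦ ?_) (by simp)
    (fun x hx ↦ sub_nonneg.2 (Real.sin_ge_sub_cube hx)) hx
  refine ((((hasDerivAt_pow 2 x).div_const 2).const_sub 1).add
    ((hasDerivAt_pow 4 x).div_const 24)).sub (Real.hasDerivAt_cos x) |>.congr_deriv ?_
  push_cast
  ring

theorem sin_le_sub_cube_add_pow_five (hx : 0 ≤ x) :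
    Real.sin x ≤ x - x ^ 3 / 6 + x ^ 5 / 120 := by
  rw [← sub_nonneg]
  refine nonneg_of_hasDerivAt_of_nonneg (f := fun x ↦ x - x ^ 3 / 6 + x ^ 5 / 120 - Real.sin x)
    (f' := fun x ↦ 1 - x ^ 2 / 2 + x ^ 4 / 24 - Real.cos x) (fun x ↦ ?_) (by simp)
    (fun x hx ↦ sub_nonneg.2 (cos_le_one_sub_sq_add_pow_four hx)) hx
  refine (((hasDerivAt_id' x).sub ((hasDerivAt_pow 3 x).div_const 6)).add
    ((hasDerivAt_pow 5 x).div_const 120)).sub (Real.hasDerivAt_sin x) |>.congr_deriv ?_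
  push_cast
  ring

theorem one_sub_sq_add_pow_four_sub_pow_six_le_cos (hx : 0 ≤ x) :
    1 - x ^ 2 / 2 + x ^ 4 / 24 - x ^ 6 / 720 ≤ Real.cos x := by
  rw [← sub_nonneg]
  refine nonneg_of_hasDerivAt_of_nonneg
    (f := fun x ↦ Real.cos x - (1 - x ^ 2 / 2 + x ^ 4 / 24 - x ^ 6 / 720))
    (f' := fun x ↦ x - x ^ 3 / 6 + x ^ 5 / 120 - Real.sin x) (fun x ↦ ?_) (by simp)
    (fun x hx ↦ sub_nonneg.2 (sin_le_sub_cube_add_pow_five hx)) hx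
  refine (Real.hasDerivAt_cos x).sub (((((hasDerivAt_pow 2 x).div_const 2).const_sub 1).add
    ((hasDerivAt_pow 4 x).div_const 24)).sub ((hasDerivAt_pow 6 x).div_const 720))
    |>.congr_deriv ?_
  push_cast
  ring

end TrigTaylor

section Moments

variable {w t : ℝ}

/-- The Touchard polynomials, that is, the moments of the Poisson distribution of parameter `w`;
at `w = 1` they are the Bell numbers. -/
noncomputable def touchard (w : ℝ) : ℕ → ℝ
  | 0 => 1
  | n + 1 => w * ∑ k : Fin (n + 1), n.choose k * touchard w k

theorem touchard_succ (w : ℝ) (n : ℕ) :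
    touchard w (n + 1) = w * ∑ k ∈ Finset.range (n + 1), n.choose k * touchard w k := by
  rw [touchard, Finset.sum_range]

@[simp]
theorem touchard_zero (w : ℝ) : touchard w 0 = 1 := by rw [touchard]

@[simp]
theorem touchard_one (w : ℝ) : touchard w 1 = w := by simp [touchard_succ]

@[simp]
theorem touchard_two (w : ℝ) : touchard w 2 = w * (1 + w) := by
  simp [touchard_succ w 1, Finset.sum_range_succ, Nat.choose, -mul_eq_mul_left_iff]

@[simp]
theorem touchard_three (w : ℝ) : touchard w 3 = w * (1 + 3 * w + w ^ 2) := by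
  simp [touchard_succ w 2, Finset.sum_range_succ, Nat.choose, -mul_eq_mul_left_iff]
  ring

@[simp]
theorem touchard_four (w : ℝ) : touchard w 4 = w * (1 + 7 * w + 6 * w ^ 2 + w ^ 3) := by
  simp [touchard_succ w 3, Finset.sum_range_succ, Nat.choose, -mul_eq_mul_left_iff]
  ring

@[simp]
theorem touchard_five (w : ℝ) :
    touchard w 5 = w * (1 + 15 * w + 25 * w ^ 2 + 10 * w ^ 3 + w ^ 4) := by
  simp [touchard_succ w 4, Finset.sum_range_succ, Nat.choose, -mul_eq_mul_left_iff]
  ring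

@[simp]
theorem touchard_six (w : ℝ) :
    touchard w 6 = w * (1 + 31 * w + 90 * w ^ 2 + 65 * w ^ 3 + 15 * w ^ 4 + w ^ 5) := by
  simp [touchard_succ w 5, Finset.sum_range_succ, Nat.choose, -mul_eq_mul_left_iff]
  ring

theorem hasSum_pow_mul_pow_div_factorial (w : ℝ) (k : ℕ) :
    HasSum (fun j : ℕ ↦ (j : ℝ) ^ k * (w ^ j / j.factorial)) (Real.exp w * touchard w k) := by
  induction k using Nat.strong_induction_on with
  | _ k ih =>
    cases k with
    | zero =>
      simpa [Real.exp_eq_exp_ℝ] using NormedSpace.expSeries_div_hasSum_exp (𝔸 := ℝ) w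
    | succ k =>
      have hsum := (hasSum_sum fun i hi ↦
        (ih i (Finset.mem_range.1 hi)).mul_left (k.choose i : ℝ)).mul_left w
      have hterm (j : ℕ) : ((j + 1 : ℕ) : ℝ) ^ (k + 1) * (w ^ (j + 1) / (j + 1).factorial) =
          w * ∑ i ∈ Finset.range (k + 1), k.choose i * ((j : ℝ) ^ i * (w ^ j / j.factorial)) := by
        have hbinom : ((j + 1 : ℕ) : ℝ) ^ k =
            ∑ i ∈ Finset.range (k + 1), (j : ℝ) ^ i * k.choose i := by
          push_cast
          simp [add_pow]
        simp_rw [← mul_assoc, ← Finset.sum_mul, mul_comm (k.choose _ : ℝ), ← hbinom,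
          Nat.factorial_succ, pow_succ]
        push_cast
        field_simp
      rw [← hasSum_nat_add_iff' 1]
      simp only [hterm, Finset.range_one, Finset.sum_singleton, CharP.cast_eq_zero, ne_eq,
        Nat.succ_ne_zero, not_false_eq_true, zero_pow, zero_mul, sub_zero]
      convert! hsum using 1
      rw [touchard_succ]
      simp only [mul_left_comm (Real.exp w), Finset.mul_sum]

theorem hasSum_re_im_exp_mul_exp (w t : ℝ) :
    HasSum (fun j : ℕ ↦ Real.cos (j * t) * (w ^ j / j.factorial))
      (Complex.exp (w * Complex.exp (t * Complex.I))).re ∧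
    HasSum (fun j : ℕ ↦ Real.sin (j * t) * (w ^ j / j.factorial))
      (Complex.exp (w * Complex.exp (t * Complex.I))).im := by
  have hsum : HasSum (fun j : ℕ ↦ (w * Complex.exp (t * Complex.I)) ^ j / j.factorial)
      (Complex.exp (w * Complex.exp (t * Complex.I))) := by
    rw [Complex.exp_eq_exp_ℂ]
    exact NormedSpace.expSeries_div_hasSum_exp _
  have hterm (j : ℕ) : (w * Complex.exp (t * Complex.I)) ^ j / j.factorial =
      ((w ^ j / j.factorial : ℝ) : ℂ) * Complex.exp ((j * t : ℝ) * Complex.I) := by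
    rw [mul_pow, ← Complex.exp_nat_mul]
    push_cast
    rw [mul_assoc (j : ℂ)]
    ring
  simp only [hterm] at hsum
  constructor
  · simpa only [Complex.re_ofReal_mul, Complex.exp_ofReal_mul_I_re, mul_comm (_ / _ : ℝ)] using
      Complex.hasSum_re hsum
  · simpa only [Complex.im_ofReal_mul, Complex.exp_ofReal_mul_I_im, mul_comm (_ / _ : ℝ)] using
      Complex.hasSum_im hsum

theorem re_exp_mul_exp_le (hw : 0 ≤ w) (ht : 0 ≤ t) :
    (Complex.exp (w * Complex.exp (t * Complex.I))).re ≤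
      Real.exp w * (1 - touchard w 2 * t ^ 2 / 2 + touchard w 4 * t ^ 4 / 24) := by
  have hM := hasSum_pow_mul_pow_div_factorial w
  have hbound := ((hM 0).sub ((hM 2).mul_left (t ^ 2 / 2))).add ((hM 4).mul_left (t ^ 4 / 24))
  refine (hasSum_le (fun j ↦ ?_) (hasSum_re_im_exp_mul_exp w t).1 hbound).trans_eq ?_
  · have hcos := cos_le_one_sub_sq_add_pow_four (x := j * t) (by positivity)
    exact (mul_le_mul_of_nonneg_right hcos (by positivity)).trans_eq (by ring)
  · rw [touchard_zero]; ring

theorem le_re_exp_mul_exp (hw : 0 ≤ w) (ht : 0 ≤ t) :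
    Real.exp w * (1 - touchard w 2 * t ^ 2 / 2 + touchard w 4 * t ^ 4 / 24 -
      touchard w 6 * t ^ 6 / 720) ≤ (Complex.exp (w * Complex.exp (t * Complex.I))).re := by
  have hM := hasSum_pow_mul_pow_div_factorial w
  have hbound := (((hM 0).sub ((hM 2).mul_left (t ^ 2 / 2))).add
    ((hM 4).mul_left (t ^ 4 / 24))).sub ((hM 6).mul_left (t ^ 6 / 720))
  refine Eq.trans_le ?_ (hasSum_le (fun j ↦ ?_) hbound (hasSum_re_im_exp_mul_exp w t).1)
  · rw [touchard_zero]; ring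
  · have hcos := one_sub_sq_add_pow_four_sub_pow_six_le_cos (x := j * t) (by positivity)
    exact Eq.trans_le (by ring) (mul_le_mul_of_nonneg_right hcos (by positivity))

theorem im_exp_mul_exp_le (hw : 0 ≤ w) (ht : 0 ≤ t) :
    (Complex.exp (w * Complex.exp (t * Complex.I))).im ≤
      Real.exp w * (touchard w 1 * t - touchard w 3 * t ^ 3 / 6 + touchard w 5 * t ^ 5 / 120) := by
  have hM := hasSum_pow_mul_pow_div_factorial w
  have hbound := (((hM 1).mul_left t).sub ((hM 3).mul_left (t ^ 3 / 6))).add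
    ((hM 5).mul_left (t ^ 5 / 120))
  refine (hasSum_le (fun j ↦ ?_) (hasSum_re_im_exp_mul_exp w t).2 hbound).trans_eq (by ring)
  have hsin := sin_le_sub_cube_add_pow_five (x := j * t) (by positivity)
  exact (mul_le_mul_of_nonneg_right hsin (by positivity)).trans_eq (by ring)

theorem le_im_exp_mul_exp (hw : 0 ≤ w) (ht : 0 ≤ t) :
    Real.exp w * (touchard w 1 * t - touchard w 3 * t ^ 3 / 6) ≤
      (Complex.exp (w * Complex.exp (t * Complex.I))).im := by
  have hM := hasSum_pow_mul_pow_div_factorial w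
  have hbound := ((hM 1).mul_left t).sub ((hM 3).mul_left (t ^ 3 / 6))
  refine Eq.trans_le (by ring)
    (hasSum_le (fun j ↦ ?_) hbound (hasSum_re_im_exp_mul_exp w t).2)
  have hsin := Real.sin_ge_sub_cube (x := j * t) (by positivity)
  exact Eq.trans_le (by ring) (mul_le_mul_of_nonneg_right hsin (by positivity))

end Moments

section Envelope

theorem exp_le_one_add_mul_exp (x : ℝ) : Real.exp x ≤ 1 + x * Real.exp x := by
  have hmul : (1 - x) * Real.exp x ≤ Real.exp (-x) * Real.exp x := by
    gcongr
    linarith [Real.add_one_le_exp (-x)]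
  rw [← Real.exp_add, neg_add_cancel, Real.exp_zero] at hmul
  linarith

theorem exp_le_one_add_add_sq_mul_exp {x : ℝ} (hx : 0 ≤ x) :
    Real.exp x ≤ 1 + x + x ^ 2 / 2 * Real.exp x := by
  rw [← sub_nonneg]
  refine nonneg_of_hasDerivAt_of_nonneg
    (f := fun x ↦ 1 + x + x ^ 2 / 2 * Real.exp x - Real.exp x)
    (f' := fun x ↦ 1 + x * Real.exp x - Real.exp x + x ^ 2 / 2 * Real.exp x)
    (fun x ↦ ?_) (by simp) (fun x _ ↦ ?_) hx
  · refine (((hasDerivAt_id' x).const_add 1).add (((hasDerivAt_pow 2 x).div_const 2).mul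
      (Real.hasDerivAt_exp x))).sub (Real.hasDerivAt_exp x) |>.congr_deriv ?_
    push_cast
    ring
  · have := sub_nonneg.2 (exp_le_one_add_mul_exp x)
    positivity

variable {q A C a b R I : ℝ}

theorem cos_le_sq_add_mul (hb : 0 ≤ b) (hba : b ≤ 2 * a) (hI : -a ≤ I) (hI' : I ≤ -a + b) :
    Real.cos I ≤ (1 - a ^ 2 / 4) ^ 2 + a * b := by
  have habs : |I| ≤ a := abs_le.2 ⟨hI, by linarith⟩
  have hcos : Real.cos I ≤ 1 - |I| ^ 2 / 2 + |I| ^ 4 / 24 := by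
    rw [← Real.cos_abs]
    exact cos_le_one_sub_sq_add_pow_four (abs_nonneg I)
  have hpow : |I| ^ 4 ≤ a ^ 4 := by gcongr
  have hsq : a ^ 2 - 2 * a * b ≤ |I| ^ 2 := by
    rw [sq_abs]
    rcases le_total a b with _ | _ <;> nlinarith [sq_nonneg I]
  have : 0 ≤ a ^ 4 := by positivity
  nlinarith

theorem exp_mul_cos_le (hA : 0 ≤ A) (hAq : A ≤ 3 / 10 * q) (hb : 0 ≤ b) (hba : b ≤ 2 * a)
    (hR : R ≤ -q + A) (hI : -a ≤ I) (hI' : I ≤ -a + b) :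
    Real.exp R * Real.cos I ≤ Real.exp (-q) * ((1 - a ^ 2 / 4) ^ 2 + A + a * b) +
      A ^ 2 / 2 * Real.exp (-(7 / 10 * q)) := by
  have ha : 0 ≤ a := by linarith
  rcases le_total (Real.cos I) 0 with hcos | hcos
  · exact (mul_nonpos_of_nonneg_of_nonpos (Real.exp_pos R).le hcos).trans (by positivity)
  have hexp : Real.exp (-q) * Real.exp A ≤ Real.exp (-(7 / 10 * q)) := by
    rw [← Real.exp_add, Real.exp_le_exp]
    linarith
  have hexp_sub : (Real.exp A - 1) * Real.cos I ≤ Real.exp A - 1 :=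
    mul_le_of_le_one_right (sub_nonneg.2 (Real.one_le_exp hA)) (Real.cos_le_one I)
  calc Real.exp R * Real.cos I ≤ Real.exp (-q + A) * Real.cos I := by gcongr
    _ = Real.exp (-q) * (Real.cos I + (Real.exp A - 1) * Real.cos I) := by
      rw [Real.exp_add]; ring
    _ ≤ Real.exp (-q) * ((1 - a ^ 2 / 4) ^ 2 + a * b + (A + A ^ 2 / 2 * Real.exp A)) := by
      gcongr
      · exact cos_le_sq_add_mul hb hba hI hI'
      · linarith [exp_le_one_add_add_sq_mul_exp hA]
    _ = Real.exp (-q) * ((1 - a ^ 2 / 4) ^ 2 + A + a * b) +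
        A ^ 2 / 2 * (Real.exp (-q) * Real.exp A) := by ring
    _ ≤ _ := by gcongr

theorem le_exp_mul_cos (hA : 0 ≤ A) (hAq : A ≤ 3 / 10 * q) (hR : R ≤ -q + A)
    (hR' : -q + (A - C) ≤ R) (hI : |I| ≤ a) :
    Real.exp (-q) * (1 + A - C - a ^ 2 / 2) - A * (a ^ 2 / 2) * Real.exp (-(7 / 10 * q)) ≤
      Real.exp R * Real.cos I := by
  have hexp : Real.exp (-q) * Real.exp A ≤ Real.exp (-(7 / 10 * q)) := by
    rw [← Real.exp_add, Real.exp_le_exp]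
    linarith
  have hcos : 1 - a ^ 2 / 2 ≤ Real.cos I := by
    have : I ^ 2 ≤ a ^ 2 := sq_le_sq.2 (hI.trans (le_abs_self a))
    linarith [Real.one_sub_sq_div_two_le_cos (x := I)]
  have hle : Real.exp (-q) * (A - C + 1) ≤ Real.exp R := calc
    _ ≤ Real.exp (-q) * Real.exp (A - C) := by gcongr; exact Real.add_one_le_exp _
    _ ≤ Real.exp R := by rw [← Real.exp_add]; gcongr
  have hge : Real.exp R ≤ Real.exp (-q) * (1 + A * Real.exp A) := calc
    Real.exp R ≤ Real.exp (-q) * Real.exp A := by rw [← Real.exp_add]; gcongr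
    _ ≤ _ := by gcongr; exact exp_le_one_add_mul_exp A
  calc
    _ ≤ Real.exp (-q) * (1 + A - C - a ^ 2 / 2) -
        A * (a ^ 2 / 2) * (Real.exp (-q) * Real.exp A) := by gcongr
    _ = Real.exp (-q) * (A - C + 1) - Real.exp (-q) * (1 + A * Real.exp A) * (a ^ 2 / 2) := by
      ring
    _ ≤ Real.exp R - Real.exp R * (a ^ 2 / 2) := by gcongr
    _ = Real.exp R * (1 - a ^ 2 / 2) := by ring
    _ ≤ Real.exp R * Real.cos I := by gcongr

variable {w t : ℝ}

/-- The power moments `∑ j, j ^ k * w ^ j / j!`, which are the Taylor coefficients at `s = 0`, up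
to the factor `1 / k!`, of the exponent `s ↦ exp (w * exp s)`. -/
noncomputable def expMoment (w : ℝ) (k : ℕ) : ℝ := Real.exp w * touchard w k

/-- A Gaussian majorant of `saddleKernel` on the central arc, in terms of the moments `m`. -/
noncomputable def upperEnvelope (m : ℕ → ℝ) (t : ℝ) : ℝ :=
  Real.exp (-(m 2 / 2 * t ^ 2)) * ((1 - (m 3 * t ^ 3 / 6) ^ 2 / 4) ^ 2 + m 4 * t ^ 4 / 24 +
    m 3 * t ^ 3 / 6 * (m 5 * t ^ 5 / 120)) +
  (m 4 * t ^ 4 / 24) ^ 2 / 2 * Real.exp (-(7 / 10 * (m 2 / 2 * t ^ 2)))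

/-- A Gaussian minorant of `saddleKernel` on the central arc `|t| ≤ r`, in terms of the moments
`m`. The term in `(t / r) ^ 8` makes it nonpositive outside that arc. -/
noncomputable def lowerEnvelope (m : ℕ → ℝ) (r t : ℝ) : ℝ :=
  Real.exp (-(m 2 / 2 * t ^ 2)) * (1 + m 4 * t ^ 4 / 24 - m 6 * t ^ 6 / 720 -
    (m 3 * t ^ 3 / 6) ^ 2 / 2) -
  m 4 * t ^ 4 / 24 * ((m 3 * t ^ 3 / 6) ^ 2 / 2) * Real.exp (-(7 / 10 * (m 2 / 2 * t ^ 2))) -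
  (1 + m 4 * t ^ 4 / 24) * (t / r) ^ 8 * Real.exp (-(m 2 / 2 * t ^ 2))

theorem touchard_nonneg (hw : 0 ≤ w) (k : ℕ) : 0 ≤ touchard w k := by
  induction k using Nat.strong_induction_on with
  | _ k ih =>
    cases k with
    | zero => simp
    | succ k =>
      rw [touchard_succ]
      exact mul_nonneg hw (Finset.sum_nonneg fun j hj ↦
        mul_nonneg (Nat.cast_nonneg _) (ih j (Finset.mem_range.1 hj)))

theorem expMoment_nonneg (hw : 0 ≤ w) (k : ℕ) : 0 ≤ expMoment w k :=
  mul_nonneg (Real.exp_pos w).le (touchard_nonneg hw k)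

theorem saddleKernel_abs (ν w t : ℝ) : saddleKernel ν w |t| = saddleKernel ν w t := by
  rcases abs_choice t with h | h <;> rw [h]
  obtain ⟨hre, him⟩ := hasSum_re_im_exp_mul_exp w t
  obtain ⟨hre', him'⟩ := hasSum_re_im_exp_mul_exp w (-t)
  simp only [mul_neg, Real.cos_neg, Real.sin_neg, neg_mul] at hre' him'
  rw [saddleKernel, saddleKernel, hre'.unique hre, him'.unique him.neg, ← Real.cos_neg]
  ring_nf

theorem upperEnvelope_abs (m : ℕ → ℝ) (t : ℝ) : upperEnvelope m |t| = upperEnvelope m t := by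
  rcases abs_choice t with h | h <;> rw [h]
  unfold upperEnvelope
  ring_nf

theorem lowerEnvelope_abs (m : ℕ → ℝ) (r t : ℝ) :
    lowerEnvelope m r |t| = lowerEnvelope m r t := by
  rcases abs_choice t with h | h <;> rw [h]
  unfold lowerEnvelope
  ring_nf

theorem upperEnvelope_nonneg {m : ℕ → ℝ} (hm : ∀ k, 0 ≤ m k) (t : ℝ) :
    0 ≤ upperEnvelope m t := by
  have := hm 3
  have := hm 4
  have := hm 5
  rw [← upperEnvelope_abs]
  unfold upperEnvelope
  positivity

theorem lowerEnvelope_nonpos {m : ℕ → ℝ} (hm : ∀ k, 0 ≤ m k) {r : ℝ} (hr : 0 < r) (ht : r ≤ |t|) :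
    lowerEnvelope m r t ≤ 0 := by
  have := hm 4
  have := hm 6
  have hpow : 1 ≤ (|t| / r) ^ 8 := one_le_pow₀ ((one_le_div hr).2 ht)
  have hcancel : (1 + m 4 * |t| ^ 4 / 24) * 1 * Real.exp (-(m 2 / 2 * |t| ^ 2)) ≤
      (1 + m 4 * |t| ^ 4 / 24) * (|t| / r) ^ 8 * Real.exp (-(m 2 / 2 * |t| ^ 2)) := by gcongr
  have hsecond : 0 ≤ m 4 * |t| ^ 4 / 24 * ((m 3 * |t| ^ 3 / 6) ^ 2 / 2) *
      Real.exp (-(7 / 10 * (m 2 / 2 * |t| ^ 2))) := by positivity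
  have hfirst : 0 ≤ Real.exp (-(m 2 / 2 * |t| ^ 2)) * (m 6 * |t| ^ 6 / 720 +
      (m 3 * |t| ^ 3 / 6) ^ 2 / 2) := by positivity
  rw [← lowerEnvelope_abs]
  unfold lowerEnvelope
  linarith

theorem saddleKernel_le_upperEnvelope (hw : 0 ≤ w) (ht : 0 ≤ t)
    (h24 : expMoment w 4 * t ^ 2 ≤ 18 / 5 * expMoment w 2)
    (h35 : expMoment w 5 * t ^ 2 ≤ 40 * expMoment w 3) :
    saddleKernel (w * Real.exp w) w t ≤ upperEnvelope (expMoment w) t := by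
  have hre := re_exp_mul_exp_le hw ht
  have him := im_exp_mul_exp_le hw ht
  have him' := le_im_exp_mul_exp hw ht
  rw [touchard_one] at him him'
  have h4 := expMoment_nonneg hw 4
  have h5 := expMoment_nonneg hw 5
  refine exp_mul_cos_le (by positivity) ?_ (by positivity) ?_ ?_ ?_ ?_
  · linarith [mul_le_mul_of_nonneg_right h24 (sq_nonneg t)]
  · linarith [mul_le_mul_of_nonneg_right h35 (pow_nonneg ht 3)]
  all_goals
    unfold expMoment
    linarith

theorem lowerEnvelope_le_saddleKernel (hw : 0 ≤ w) (ht : 0 ≤ t)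
    (h24 : expMoment w 4 * t ^ 2 ≤ 18 / 5 * expMoment w 2)
    (h35 : expMoment w 5 * t ^ 2 ≤ 40 * expMoment w 3) (r : ℝ) :
    lowerEnvelope (expMoment w) r t ≤ saddleKernel (w * Real.exp w) w t := by
  have hre := re_exp_mul_exp_le hw ht
  have hre' := le_re_exp_mul_exp hw ht
  have him := im_exp_mul_exp_le hw ht
  have him' := le_im_exp_mul_exp hw ht
  rw [touchard_one] at him him'
  have h4 := expMoment_nonneg hw 4
  have hcorrection : 0 ≤ (1 + expMoment w 4 * t ^ 4 / 24) * (t / r) ^ 8 *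
      Real.exp (-(expMoment w 2 / 2 * t ^ 2)) :=
    mul_nonneg (mul_nonneg (by positivity) (Even.pow_nonneg (by decide) _)) (Real.exp_pos _).le
  refine (sub_le_self _ hcorrection).trans (le_exp_mul_cos (by positivity) ?_ ?_ ?_ ?_)
  · linarith [mul_le_mul_of_nonneg_right h24 (sq_nonneg t)]
  · unfold expMoment
    linarith
  · unfold expMoment
    linarith
  · have hba := mul_le_mul_of_nonneg_right h35 (pow_nonneg ht 3)
    unfold expMoment at hba ⊢
    exact abs_le.2 ⟨by linarith, by linarith⟩

end Envelope

section GaussianIntegral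

open MeasureTheory

variable {b : ℝ}

theorem integrable_pow_mul_exp_neg_mul_sq (hb : 0 < b) (k : ℕ) :
    Integrable fun t : ℝ ↦ t ^ k * Real.exp (-b * t ^ 2) := by
  have hk : (-1 : ℝ) < k := by linarith [k.cast_nonneg (α := ℝ)]
  simpa only [Real.rpow_natCast] using integrable_rpow_mul_exp_neg_mul_sq hb hk

theorem integral_pow_mul_exp_neg_mul_sq (hb : 0 < b) (k : ℕ) :
    ∫ t : ℝ, t ^ (2 * k) * Real.exp (-b * t ^ 2) =
      (2 * k - 1).doubleFactorial / (2 * b) ^ k * √(Real.pi / b) := by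
  have heven (t : ℝ) : |t| ^ (2 * k) * Real.exp (-b * |t| ^ 2) =
      t ^ (2 * k) * Real.exp (-b * t ^ 2) := by
    rw [sq_abs, pow_mul, sq_abs, pow_mul]
  have hhalf := integral_comp_abs (f := fun t : ℝ ↦ t ^ (2 * k) * Real.exp (-b * t ^ 2))
  simp only [heven] at hhalf
  have hk : (-1 : ℝ) < (2 * k : ℕ) := by linarith [(2 * k).cast_nonneg (α := ℝ)]
  have hGamma := integral_rpow_mul_exp_neg_mul_rpow two_pos hk hb
  simp only [Real.rpow_natCast, Real.rpow_ofNat] at hGamma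
  rw [hhalf, hGamma, show (((2 * k : ℕ) : ℝ) + 1) / 2 = k + 1 / 2 by push_cast; ring,
    show -(((2 * k : ℕ) : ℝ) + 1) / 2 = -(k : ℝ) + -(1 / 2) by push_cast; ring,
    Real.Gamma_nat_add_half, Real.rpow_add hb, Real.rpow_neg hb.le, Real.rpow_natCast,
    Real.rpow_neg hb.le, ← Real.sqrt_eq_rpow, Real.sqrt_div Real.pi_pos.le, mul_pow]
  have : √b ≠ 0 := by positivity
  field_simp

theorem integrable_sum_mul_exp_neg_mul_sq (hb : 0 < b) {j : ℕ} (c : Fin j → ℝ) :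
    Integrable fun t : ℝ ↦ (∑ k : Fin j, c k * t ^ (2 * (k : ℕ))) * Real.exp (-b * t ^ 2) := by
  simp only [Finset.sum_mul, mul_assoc]
  exact integrable_finsetSum _ fun k _ ↦ (integrable_pow_mul_exp_neg_mul_sq hb _).const_mul _

theorem integral_sum_mul_exp_neg_mul_sq (hb : 0 < b) {j : ℕ} (c : Fin j → ℝ) :
    ∫ t : ℝ, (∑ k : Fin j, c k * t ^ (2 * (k : ℕ))) * Real.exp (-b * t ^ 2) =
      (∑ k : Fin j, c k * ((2 * k - 1 : ℕ).doubleFactorial / (2 * b) ^ (k : ℕ))) *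
        √(Real.pi / b) := by
  simp only [Finset.sum_mul, mul_assoc]
  rw [integral_finsetSum _ fun k _ ↦ (integrable_pow_mul_exp_neg_mul_sq hb _).const_mul _]
  simp only [integral_const_mul, integral_pow_mul_exp_neg_mul_sq hb]

theorem intervalIntegral_le_integral_add {g h : ℝ → ℝ} {a b ε : ℝ} (hab : a ≤ b)
    (hg : IntervalIntegrable g volume a b) (hh : Integrable h)
    (hgh : ∀ t ∈ Set.Icc a b, g t ≤ h t + ε) (hh0 : ∀ t ∉ Set.Icc a b, 0 ≤ h t) :
    ∫ t in a..b, g t ≤ (∫ t, h t) + (b - a) * ε := by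
  have hmono : ∫ t in a..b, g t ≤ ∫ t in a..b, (h t + ε) :=
    intervalIntegral.integral_mono_on hab hg
      (hh.intervalIntegrable.add intervalIntegrable_const) hgh
  rw [intervalIntegral.integral_add hh.intervalIntegrable intervalIntegrable_const,
    intervalIntegral.integral_const, smul_eq_mul] at hmono
  have hcompl : 0 ≤ ∫ t in (Set.Icc a b)ᶜ, h t :=
    setIntegral_nonneg measurableSet_Icc.compl hh0
  have hIcc : ∫ t in a..b, h t = ∫ t in Set.Icc a b, h t := by
    rw [intervalIntegral.integral_of_le hab, integral_Icc_eq_integral_Ioc]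
  linarith [integral_add_compl (s := Set.Icc a b) measurableSet_Icc hh]

variable {m : ℕ → ℝ}

theorem sqrt_pi_div_seven_tenths_mul (x : ℝ) :
    √(Real.pi / (7 / 10 * (x / 2))) = √(10 / 7) * √(2 * Real.pi / x) := by
  rw [← Real.sqrt_mul (by norm_num)]
  congr 1
  ring

theorem upperEnvelope_eq_sum (m : ℕ → ℝ) : upperEnvelope m = fun t ↦
    (∑ k : Fin 7, (![1, 0, m 4 / 24, -(m 3 ^ 2 / 72), m 3 * m 5 / 720, 0, m 3 ^ 4 / 20736] :
      Fin 7 → ℝ) k * t ^ (2 * (k : ℕ))) * Real.exp (-(m 2 / 2) * t ^ 2) +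
    (∑ k : Fin 5, (![0, 0, 0, 0, m 4 ^ 2 / 1152] : Fin 5 → ℝ) k * t ^ (2 * (k : ℕ))) *
      Real.exp (-(7 / 10 * (m 2 / 2)) * t ^ 2) := by
  funext t
  simp only [upperEnvelope, Fin.sum_univ_seven, Fin.sum_univ_five, Matrix.cons_val,
    Fin.coe_ofNat_eq_mod, Nat.reduceMod, Nat.reduceMul]
  ring_nf

theorem lowerEnvelope_eq_sum (m : ℕ → ℝ) (r : ℝ) : lowerEnvelope m r = fun t ↦
    (∑ k : Fin 7, (![1, 0, m 4 / 24, -(m 3 ^ 2 / 72 + m 6 / 720), -(1 / r ^ 8), 0,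
      -(m 4 / 24 / r ^ 8)] : Fin 7 → ℝ) k * t ^ (2 * (k : ℕ))) * Real.exp (-(m 2 / 2) * t ^ 2) +
    (∑ k : Fin 6, (![0, 0, 0, 0, 0, -(m 4 * m 3 ^ 2 / 1728)] : Fin 6 → ℝ) k *
      t ^ (2 * (k : ℕ))) * Real.exp (-(7 / 10 * (m 2 / 2)) * t ^ 2) := by
  funext t
  simp only [lowerEnvelope, Fin.sum_univ_seven, Fin.sum_univ_six, Matrix.cons_val,
    Fin.coe_ofNat_eq_mod, Nat.reduceMod, Nat.reduceMul]
  ring_nf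

theorem integrable_upperEnvelope (hm : 0 < m 2) : Integrable (upperEnvelope m) := by
  rw [upperEnvelope_eq_sum]
  exact (integrable_sum_mul_exp_neg_mul_sq (by positivity) _).add
    (integrable_sum_mul_exp_neg_mul_sq (by positivity) _)

theorem integrable_lowerEnvelope (hm : 0 < m 2) (r : ℝ) : Integrable (lowerEnvelope m r) := by
  rw [lowerEnvelope_eq_sum]
  exact (integrable_sum_mul_exp_neg_mul_sq (by positivity) _).add
    (integrable_sum_mul_exp_neg_mul_sq (by positivity) _)

/-- The first-order coefficient of the saddle-point expansion with exponent
`-(m 2 * t ^ 2 / 2) + m 4 * t ^ 4 / 24` and phase `m 3 * t ^ 3 / 6`, relative to the Gaussian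
integral `√(2π / m 2)`. -/
noncomputable def saddleCorrection (m : ℕ → ℝ) : ℝ :=
  m 4 / (8 * m 2 ^ 2) - 5 * m 3 ^ 2 / (24 * m 2 ^ 3)

/-- The part of `∫ upperEnvelope m`, relative to the Gaussian integral `√(2π / m 2)`, that exceeds
`1 + saddleCorrection m`. -/
noncomputable def upperRemainder (m : ℕ → ℝ) : ℝ :=
  7 * m 3 * m 5 / (48 * m 2 ^ 4) + 385 * m 3 ^ 4 / (768 * m 2 ^ 6) +
    35 * m 4 ^ 2 / (384 * (7 / 10 * m 2) ^ 4) * √(10 / 7)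

/-- The amount by which `∫ lowerEnvelope m r`, relative to the Gaussian integral `√(2π / m 2)`,
falls short of `1 + saddleCorrection m`. -/
noncomputable def lowerRemainder (m : ℕ → ℝ) (r : ℝ) : ℝ :=
  m 6 / (48 * m 2 ^ 3) + 105 / (r ^ 8 * m 2 ^ 4) + 3465 * m 4 / (8 * r ^ 8 * m 2 ^ 6) +
    35 * m 4 * m 3 ^ 2 / (64 * (7 / 10 * m 2) ^ 5) * √(10 / 7)

theorem integral_upperEnvelope (hm : 0 < m 2) : ∫ t, upperEnvelope m t =
    (1 + saddleCorrection m + upperRemainder m) * √(2 * Real.pi / m 2) := by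
  rw [upperEnvelope_eq_sum, integral_add (integrable_sum_mul_exp_neg_mul_sq (by positivity) _)
    (integrable_sum_mul_exp_neg_mul_sq (by positivity) _),
    integral_sum_mul_exp_neg_mul_sq (by positivity),
    integral_sum_mul_exp_neg_mul_sq (by positivity), sqrt_pi_div_seven_tenths_mul,
    show Real.pi / (m 2 / 2) = 2 * Real.pi / m 2 by ring]
  simp only [Fin.sum_univ_seven, Fin.sum_univ_five, Matrix.cons_val, Fin.coe_ofNat_eq_mod,
    Nat.reduceMod, Nat.reduceMul, Nat.reduceSub, Nat.doubleFactorial,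
    saddleCorrection, upperRemainder]
  ring

theorem integral_lowerEnvelope (hm : 0 < m 2) (r : ℝ) : ∫ t, lowerEnvelope m r t =
    (1 + saddleCorrection m - lowerRemainder m r) * √(2 * Real.pi / m 2) := by
  rw [lowerEnvelope_eq_sum, integral_add (integrable_sum_mul_exp_neg_mul_sq (by positivity) _)
    (integrable_sum_mul_exp_neg_mul_sq (by positivity) _),
    integral_sum_mul_exp_neg_mul_sq (by positivity),
    integral_sum_mul_exp_neg_mul_sq (by positivity), sqrt_pi_div_seven_tenths_mul,
    show Real.pi / (m 2 / 2) = 2 * Real.pi / m 2 by ring]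
  simp only [Fin.sum_univ_seven, Fin.sum_univ_six, Matrix.cons_val, Fin.coe_ofNat_eq_mod,
    Nat.reduceMod, Nat.reduceMul, Nat.reduceSub, Nat.doubleFactorial,
    saddleCorrection, lowerRemainder]
  ring

end GaussianIntegral

section Stirling

open Filter Topology

theorem monotone_log_stirlingSeq_sub {n : ℕ} (hn : n ≠ 0) :
    Monotone fun m : ℕ ↦ Real.log (Stirling.stirlingSeq (m + n)) - 1 / 12 / (m + n : ℕ) := by
  refine monotone_nat_of_le_succ fun m ↦ ?_
  have htelescope : 1 / (12 * ((m + n : ℕ) : ℝ) * ((m + n : ℕ) + 1)) =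
      1 / 12 / (m + n : ℕ) - 1 / 12 / ((m + n : ℕ) + 1) := by
    field_simp
    ring
  have hdiff := Stirling.log_stirlingSeq_sdiff_le (m + n)
  rw [htelescope] at hdiff
  rw [show m + 1 + n = m + n + 1 by ring, Nat.cast_succ]
  linarith

theorem log_stirlingSeq_le {n : ℕ} (hn : n ≠ 0) :
    Real.log (Stirling.stirlingSeq n) ≤ Real.log √Real.pi + 1 / 12 / n := by
  have hlog : Tendsto (fun m ↦ Real.log (Stirling.stirlingSeq m)) atTop (𝓝 (Real.log √Real.pi)) :=
    Stirling.tendsto_stirlingSeq_sqrt_pi.log (by positivity)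
  have hlim := (tendsto_add_atTop_iff_nat n).2
    (hlog.sub (tendsto_const_div_atTop_nhds_zero_nat (1 / 12 : ℝ)))
  have hle := (monotone_log_stirlingSeq_sub hn).ge_of_tendsto hlim 0
  rw [zero_add] at hle
  linarith

theorem factorial_le_stirling_mul_exp {n : ℕ} (hn : n ≠ 0) :
    (n.factorial : ℝ) ≤
      √(2 * Real.pi * n) * (n / Real.exp 1) ^ n * Real.exp (1 / (12 * n)) := by
  have hpos : 0 < Stirling.stirlingSeq n := by
    obtain ⟨m, rfl⟩ := Nat.exists_eq_succ_of_ne_zero hn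
    exact Stirling.stirlingSeq'_pos m
  have hle := Real.exp_le_exp.2 (log_stirlingSeq_le hn)
  rw [Real.exp_add, Real.exp_log hpos, Real.exp_log (by positivity), Stirling.stirlingSeq,
    div_le_iff₀ (by positivity), div_div] at hle
  refine hle.trans_eq ?_
  rw [show 2 * Real.pi * (n : ℝ) = Real.pi * (2 * n) by ring, Real.sqrt_mul Real.pi_pos.le]
  ring

end Stirling

section FarArc

variable {w t : ℝ}

theorem abs_saddleKernel_le (ν w t : ℝ) :
    |saddleKernel ν w t| ≤ Real.exp (Real.exp (w * Real.cos t) - Real.exp w) := by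
  have hre : (Complex.exp (w * Complex.exp (t * Complex.I))).re ≤ Real.exp (w * Real.cos t) := by
    refine (Complex.re_le_norm _).trans_eq ?_
    rw [Complex.norm_exp, Complex.re_ofReal_mul, Complex.exp_ofReal_mul_I_re]
  rw [saddleKernel, abs_mul, abs_of_pos (Real.exp_pos _)]
  refine (mul_le_of_le_one_right (Real.exp_pos _).le (Real.abs_cos_le_one _)).trans ?_
  gcongr

theorem mul_cos_le_sub_div (hw : 9 / 2 ≤ w) (ht : 5 / (4 * w) ≤ t) (htpi : t ≤ Real.pi) :
    w * Real.cos t ≤ w - 97 / 125 / w := by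
  have ht0 : 0 ≤ 5 / (4 * w) := by positivity
  calc w * Real.cos t ≤ w * Real.cos (5 / (4 * w)) := by
        gcongr
        exact Real.cos_le_cos_of_nonneg_of_le_pi ht0 htpi ht
    _ ≤ w * (1 - (5 / (4 * w)) ^ 2 / 2 + (5 / (4 * w)) ^ 4 / 24) := by
        gcongr
        exact cos_le_one_sub_sq_add_pow_four ht0
    _ = w - (25 / 32 - 625 / 6144 / w ^ 2) / w := by field_simp; ring
    _ ≤ w - 97 / 125 / w := by
        gcongr
        rw [le_sub_comm, div_le_iff₀ (by positivity)]
        nlinarith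

theorem exp_neg_le_one_sub_mul {x : ℝ} (hx : 0 ≤ x) (hx' : x ≤ 69 / 400) :
    Real.exp (-x) ≤ 1 - 709 / 776 * x := by
  have hquadratic := Real.quadratic_le_exp_of_nonneg hx
  rw [Real.exp_neg, inv_le_comm₀ (Real.exp_pos x) (by linarith)]
  refine le_trans ?_ hquadratic
  rw [inv_le_iff_one_le_mul₀ (by linarith)]
  nlinarith [mul_nonneg hx (sub_nonneg.2 hx'), mul_nonneg (mul_nonneg hx hx) (sub_nonneg.2 hx')]

theorem abs_saddleKernel_le_of_far (ν : ℝ) (hw : 9 / 2 ≤ w) (ht : 5 / (4 * w) ≤ t)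
    (htpi : t ≤ Real.pi) :
    |saddleKernel ν w t| ≤ Real.exp (-(709 / 1000 * Real.exp w / w)) := by
  have hw0 : 0 < w := by linarith
  have hsmall : 97 / 125 / w ≤ 69 / 400 := by
    rw [div_le_iff₀ hw0]
    linarith
  have hexp : Real.exp (w * Real.cos t) ≤ Real.exp w * (1 - 709 / 776 * (97 / 125 / w)) := calc
    _ ≤ Real.exp (w - 97 / 125 / w) := Real.exp_le_exp.2 (mul_cos_le_sub_div hw ht htpi)
    _ = Real.exp w * Real.exp (-(97 / 125 / w)) := by rw [← Real.exp_add, sub_eq_add_neg]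
    _ ≤ _ := by
      gcongr
      exact exp_neg_le_one_sub_mul (by positivity) hsmall
  refine (abs_saddleKernel_le ν w t).trans (Real.exp_le_exp.2 ?_)
  linarith [show Real.exp w * (1 - 709 / 776 * (97 / 125 / w)) =
    Real.exp w - 709 / 1000 * Real.exp w / w by ring]

end FarArc

section MomentBounds

variable {w t : ℝ}

theorem touchard_four_le_mul_touchard_two (hw : 9 / 2 ≤ w) :
    touchard w 4 ≤ 221 / 100 * w ^ 2 * touchard w 2 := by
  obtain ⟨x, hx, rfl⟩ := exists_nonneg_add_of_le hw
  rw [touchard_two, touchard_four, ← sub_nonneg]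
  ring_nf
  positivity

theorem touchard_five_le_mul_touchard_three (hw : 9 / 2 ≤ w) :
    touchard w 5 ≤ 10 * w ^ 2 * touchard w 3 := by
  obtain ⟨x, hx, rfl⟩ := exists_nonneg_add_of_le hw
  rw [touchard_three, touchard_five, ← sub_nonneg]
  ring_nf
  positivity

theorem touchard_three_le (hw : 9 / 2 ≤ w) :
    touchard w 3 ≤ 1149 / 1000 * (w * (1 + w) ^ 2) := by
  obtain ⟨x, hx, rfl⟩ := exists_nonneg_add_of_le hw
  rw [touchard_three, ← sub_nonneg]
  ring_nf
  positivity

theorem touchard_four_le (hw : 9 / 2 ≤ w) :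
    touchard w 4 ≤ 737 / 500 * (w * (1 + w) ^ 3) := by
  obtain ⟨x, hx, rfl⟩ := exists_nonneg_add_of_le hw
  rw [touchard_four, ← sub_nonneg]
  ring_nf
  positivity

theorem touchard_five_le (hw : 9 / 2 ≤ w) :
    touchard w 5 ≤ 52 / 25 * (w * (1 + w) ^ 4) := by
  obtain ⟨x, hx, rfl⟩ := exists_nonneg_add_of_le hw
  rw [touchard_five, ← sub_nonneg]
  ring_nf
  positivity

theorem touchard_six_le (hw : 9 / 2 ≤ w) :
    touchard w 6 ≤ 79 / 25 * (w * (1 + w) ^ 5) := by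
  obtain ⟨x, hx, rfl⟩ := exists_nonneg_add_of_le hw
  rw [touchard_six, ← sub_nonneg]
  ring_nf
  positivity

theorem le_touchard_three_sq_sub (hw : 9 / 2 ≤ w) : 49 / 100 * (w ^ 2 * (1 + w) ^ 3) ≤
    5 / 24 * touchard w 3 ^ 2 - touchard w 4 * touchard w 2 / 8 := by
  obtain ⟨x, hx, rfl⟩ := exists_nonneg_add_of_le hw
  rw [touchard_two, touchard_three, touchard_four, ← sub_nonneg]
  ring_nf
  positivity

theorem touchard_three_sq_sub_le (hw : 9 / 2 ≤ w) :
    5 / 24 * touchard w 3 ^ 2 - touchard w 4 * touchard w 2 / 8 ≤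
      ((w + 3 / 2) / 5 - 17 / 25) * (w ^ 2 * (1 + w) ^ 3) := by
  obtain ⟨x, hx, rfl⟩ := exists_nonneg_add_of_le hw
  rw [touchard_two, touchard_three, touchard_four, ← sub_nonneg]
  ring_nf
  positivity

theorem expMoment_two (w : ℝ) : expMoment w 2 = w * Real.exp w * (1 + w) := by
  rw [expMoment, touchard_two]
  ring

theorem expMoment_le_of_touchard_le {k : ℕ} {c y : ℝ} (h : touchard w k ≤ c * (w * y)) :
    expMoment w k ≤ c * (w * Real.exp w * y) :=
  (mul_le_mul_of_nonneg_left h (Real.exp_pos w).le).trans_eq (by ring)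

theorem expMoment_mul_sq_le {j k : ℕ} {c d : ℝ} (hw : 0 < w) (ht : 0 ≤ t) (htw : t ≤ 5 / (4 * w))
    (h : touchard w k ≤ c * w ^ 2 * touchard w j) (hc : 0 ≤ c) (hcd : 25 / 16 * c ≤ d) :
    expMoment w k * t ^ 2 ≤ d * expMoment w j := by
  have hj := expMoment_nonneg hw.le j
  have htw' : t * w ≤ 5 / 4 := by
    rw [le_div_iff₀ (by positivity)] at htw
    linarith
  calc expMoment w k * t ^ 2 ≤ Real.exp w * (c * w ^ 2 * touchard w j) * t ^ 2 := by
        unfold expMoment; gcongr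
    _ = (t * w) ^ 2 * c * expMoment w j := by unfold expMoment; ring
    _ ≤ (5 / 4) ^ 2 * c * expMoment w j := by gcongr
    _ ≤ d * expMoment w j := by gcongr; linarith

theorem ninety_le_exp : (90 : ℝ) ≤ Real.exp (9 / 2) := by
  have hsq : Real.exp (9 / 2) ^ 2 = Real.exp 1 ^ 9 := by
    rw [← Real.exp_nat_mul, ← Real.exp_nat_mul]
    norm_num
  refine le_of_sq_le_sq ?_ (Real.exp_pos _).le
  calc (90 : ℝ) ^ 2 ≤ 2.7182818283 ^ 9 := by norm_num
    _ ≤ Real.exp (9 / 2) ^ 2 := by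
      rw [hsq]
      gcongr
      exact Real.exp_one_gt_d9.le

theorem quadratic_le_exp (hw : 9 / 2 ≤ w) :
    90 * (1 + (w - 9 / 2) + (w - 9 / 2) ^ 2 / 2) ≤ Real.exp w := calc
  _ ≤ Real.exp (9 / 2) * Real.exp (w - 9 / 2) := by
    have := sub_nonneg.2 hw
    gcongr
    exacts [ninety_le_exp, Real.quadratic_le_exp_of_nonneg this]
  _ = Real.exp w := by rw [← Real.exp_add]; ring_nf

theorem one_add_sq_le_mul_exp (hw : 9 / 2 ≤ w) :
    669 / 50 * (1 + w) ^ 2 ≤ w * Real.exp w := by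
  have hexp := quadratic_le_exp hw
  obtain ⟨x, hx, rfl⟩ := exists_nonneg_add_of_le hw
  refine le_trans ?_ (mul_le_mul_of_nonneg_left hexp (by positivity))
  rw [← sub_nonneg]
  ring_nf
  positivity

end MomentBounds

section SaddlePointIntegral

open MeasureTheory

variable {w t : ℝ}

theorem saddleKernel_le (hw : 9 / 2 ≤ w) (ht : |t| ≤ Real.pi) :
    saddleKernel (w * Real.exp w) w t ≤
      upperEnvelope (expMoment w) t + Real.exp (-(709 / 1000 * Real.exp w / w)) := by
  have hw0 : 0 < w := by linarith
  rw [← saddleKernel_abs, ← upperEnvelope_abs]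
  rcases le_total |t| (5 / (4 * w)) with hnear | hfar
  · refine le_add_of_le_of_nonneg (saddleKernel_le_upperEnvelope hw0.le (abs_nonneg t) ?_ ?_)
      (Real.exp_pos _).le
    · exact expMoment_mul_sq_le hw0 (abs_nonneg t) hnear
        (touchard_four_le_mul_touchard_two hw) (by norm_num) (by norm_num)
    · exact expMoment_mul_sq_le hw0 (abs_nonneg t) hnear
        (touchard_five_le_mul_touchard_three hw) (by norm_num) (by norm_num)
  · exact le_add_of_nonneg_of_le (upperEnvelope_nonneg (expMoment_nonneg hw0.le) _)
      ((le_abs_self _).trans (abs_saddleKernel_le_of_far _ hw hfar ht))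

theorem le_saddleKernel (hw : 9 / 2 ≤ w) (ht : |t| ≤ Real.pi) :
    lowerEnvelope (expMoment w) (5 / (4 * w)) t - Real.exp (-(709 / 1000 * Real.exp w / w)) ≤
      saddleKernel (w * Real.exp w) w t := by
  have hw0 : 0 < w := by linarith
  rw [← saddleKernel_abs]
  rcases le_total |t| (5 / (4 * w)) with hnear | hfar
  · rw [← lowerEnvelope_abs]
    refine (sub_le_self _ (Real.exp_pos _).le).trans
      (lowerEnvelope_le_saddleKernel hw0.le (abs_nonneg t) ?_ ?_ _)
    · exact expMoment_mul_sq_le hw0 (abs_nonneg t) hnear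
        (touchard_four_le_mul_touchard_two hw) (by norm_num) (by norm_num)
    · exact expMoment_mul_sq_le hw0 (abs_nonneg t) hnear
        (touchard_five_le_mul_touchard_three hw) (by norm_num) (by norm_num)
  · have hneg := lowerEnvelope_nonpos (expMoment_nonneg hw0.le) (by positivity) hfar
    linarith [(abs_le.1 (abs_saddleKernel_le_of_far (w * Real.exp w) hw hfar ht)).1]

theorem expMoment_two_pos (hw : 0 < w) : 0 < expMoment w 2 := by
  rw [expMoment_two]
  positivity

theorem integral_saddleKernel_le_integral_upperEnvelope (hw : 9 / 2 ≤ w) :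
    ∫ t in -Real.pi..Real.pi, saddleKernel (w * Real.exp w) w t ≤
      (∫ t, upperEnvelope (expMoment w) t) +
        2 * Real.pi * Real.exp (-(709 / 1000 * Real.exp w / w)) := by
  have hw0 : 0 < w := by linarith
  refine (intervalIntegral_le_integral_add (by linarith [Real.pi_pos])
    ((continuous_saddleKernel _ w).intervalIntegrable _ _)
    (integrable_upperEnvelope (expMoment_two_pos hw0))
    (fun t ht ↦ saddleKernel_le hw (abs_le.2 ht))
    fun t _ ↦ upperEnvelope_nonneg (expMoment_nonneg hw0.le) t).trans_eq (by ring)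

theorem integral_lowerEnvelope_le_integral_saddleKernel (hw : 9 / 2 ≤ w) :
    (∫ t, lowerEnvelope (expMoment w) (5 / (4 * w)) t) -
        2 * Real.pi * Real.exp (-(709 / 1000 * Real.exp w / w)) ≤
      ∫ t in -Real.pi..Real.pi, saddleKernel (w * Real.exp w) w t := by
  have hw0 : 0 < w := by linarith
  have hr : 5 / (4 * w) ≤ Real.pi := by
    refine le_trans ?_ Real.pi_gt_three.le
    rw [div_le_iff₀ (by positivity)]
    linarith
  have hle := intervalIntegral_le_integral_add (g := fun t ↦ -saddleKernel (w * Real.exp w) w t)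
    (h := fun t ↦ -lowerEnvelope (expMoment w) (5 / (4 * w)) t)
    (ε := Real.exp (-(709 / 1000 * Real.exp w / w))) (neg_le_self Real.pi_pos.le)
    ((continuous_saddleKernel _ w).neg.intervalIntegrable _ _)
    (integrable_lowerEnvelope (expMoment_two_pos hw0) _).neg
    (fun t ht ↦ by linarith [le_saddleKernel hw (abs_le.2 ht)]) fun t ht ↦ by
      have hfar : Real.pi ≤ |t| := (not_le.1 (mt abs_le.1 ht)).le
      exact neg_nonneg.2
        (lowerEnvelope_nonpos (expMoment_nonneg hw0.le) (by positivity) (hr.trans hfar))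
  rw [intervalIntegral.integral_neg, integral_neg] at hle
  linarith

theorem pow_mul_le_exp (hw : 9 / 2 ≤ w) :
    200 * Real.pi * (w * Real.exp w) ^ 3 * (1 + w) ≤
      Real.exp (709 / 1000 * Real.exp w / w) ^ 2 := by
  have hexp := quadratic_le_exp hw
  obtain ⟨x, hx, rfl⟩ := exists_nonneg_add_of_le hw
  have hexponent : 1418 / 100 + 99 / 10 * x ≤ 709 / 1000 * Real.exp (9 / 2 + x) / (9 / 2 + x) := by
    rw [le_div_iff₀ (by positivity)]
    nlinarith
  have hlin := Real.add_one_le_exp x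
  have hconst : (400000 : ℝ) ≤ Real.exp 13 := calc
    (400000 : ℝ) ≤ 2.7 ^ 13 := by norm_num
    _ ≤ Real.exp 1 ^ 13 := by gcongr; linarith [Real.exp_one_gt_d9]
    _ = Real.exp 13 := by rw [← Real.exp_nat_mul]; norm_num
  calc
    _ ≤ 200 * 3.15 * (9 / 2 * Real.exp x * Real.exp (9 / 2 + x)) ^ 3 * (11 / 2 * Real.exp x) := by
      gcongr
      exacts [Real.pi_lt_d2.le, by linarith, by linarith]
    _ = 200 * 3.15 * (9 / 2) ^ 3 * (11 / 2) * (Real.exp x ^ 4 * Real.exp (9 / 2 + x) ^ 3) := by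
      ring
    _ ≤ Real.exp 13 * (Real.exp x ^ 4 * Real.exp (9 / 2 + x) ^ 3) := by
      gcongr
      linarith
    _ = Real.exp (13 + (4 * x + 3 * (9 / 2 + x))) := by
      rw [← Real.exp_nat_mul, ← Real.exp_nat_mul, ← Real.exp_add, ← Real.exp_add]
      norm_num
    _ ≤ Real.exp (2 * (709 / 1000 * Real.exp (9 / 2 + x) / (9 / 2 + x))) := by
      gcongr
      linarith
    _ = _ := by rw [← Real.exp_nat_mul]; norm_num

theorem two_pi_mul_exp_neg_le (hw : 9 / 2 ≤ w) :
    2 * Real.pi * Real.exp (-(709 / 1000 * Real.exp w / w)) ≤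
      1 / 10 / (w * Real.exp w) * √(2 * Real.pi / expMoment w 2) := by
  have hpow := pow_mul_le_exp hw
  rw [expMoment_two]
  generalize 709 / 1000 * Real.exp w / w = D at hpow ⊢
  have hN : 0 < w * Real.exp w := by positivity
  generalize w * Real.exp w = N at hN hpow ⊢
  have hsqrt : 20 * Real.pi * N / Real.exp D ≤ √(2 * Real.pi / (N * (1 + w))) := by
    apply Real.le_sqrt_of_sq_le
    rw [div_pow, div_le_div_iff₀ (by positivity) (by positivity)]
    linarith [mul_le_mul_of_nonneg_left hpow (by positivity : 0 ≤ 2 * Real.pi)]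
  calc 2 * Real.pi * Real.exp (-D) = 1 / 10 / N * (20 * Real.pi * N / Real.exp D) := by
        rw [Real.exp_neg]
        field_simp
        ring
    _ ≤ _ := by gcongr

theorem sqrt_ten_div_seven_le : √(10 / 7) ≤ 299 / 250 := by
  rw [Real.sqrt_le_left (by norm_num)]
  norm_num

theorem saddleCorrection_expMoment (hw : 0 < w) :
    saddleCorrection (expMoment w) =
      -((5 / 24 * touchard w 3 ^ 2 - touchard w 4 * touchard w 2 / 8) /
        (w ^ 2 * (1 + w) ^ 3) / (w * Real.exp w)) := by
  simp only [saddleCorrection, expMoment, touchard_two]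
  field_simp
  ring

theorem saddleCorrection_le (hw : 9 / 2 ≤ w) :
    saddleCorrection (expMoment w) ≤ -(49 / 100 / (w * Real.exp w)) := by
  have hw0 : 0 < w := by linarith
  rw [saddleCorrection_expMoment hw0, neg_le_neg_iff]
  refine div_le_div_of_nonneg_right ?_ (by positivity)
  rw [le_div_iff₀ (by positivity)]
  exact le_touchard_three_sq_sub hw

theorem le_saddleCorrection (hw : 9 / 2 ≤ w) :
    -(((w + 3 / 2) / 5 - 17 / 25) / (w * Real.exp w)) ≤
      saddleCorrection (expMoment w) := by
  have hw0 : 0 < w := by linarith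
  rw [saddleCorrection_expMoment hw0, neg_le_neg_iff]
  gcongr
  rw [div_le_iff₀ (by positivity)]
  exact touchard_three_sq_sub_le hw

theorem upperRemainder_le (hw : 9 / 2 ≤ w) :
    upperRemainder (expMoment w) ≤ 5 / 2 * ((1 + w) / (w * Real.exp w)) ^ 2 := by
  have hw0 : 0 < w := by linarith
  have h₃ := expMoment_le_of_touchard_le (touchard_three_le hw)
  have h₄ := expMoment_le_of_touchard_le (touchard_four_le hw)
  have h₅ := expMoment_le_of_touchard_le (touchard_five_le hw)
  have h₃' := expMoment_nonneg hw0.le 3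
  have h₄' := expMoment_nonneg hw0.le 4
  have h₅' := expMoment_nonneg hw0.le 5
  have hsqrt := sqrt_ten_div_seven_le
  rw [upperRemainder, expMoment_two]
  set N := w * Real.exp w
  have hN0 : 0 < N := by positivity
  set v := 1 + w
  have hv0 : 0 < v := by positivity
  calc
    _ ≤ 7 * (1149 / 1000 * (N * v ^ 2)) * (52 / 25 * (N * v ^ 4)) / (48 * (N * v) ^ 4) +
        385 * (1149 / 1000 * (N * v ^ 2)) ^ 4 / (768 * (N * v) ^ 6) +
        35 * (737 / 500 * (N * v ^ 3)) ^ 2 / (384 * (7 / 10 * (N * v)) ^ 4) * (299 / 250) := by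
      gcongr
    _ = (7 * (1149 / 1000) * (52 / 25) / 48 + 385 * (1149 / 1000) ^ 4 / 768 +
        35 * (737 / 500) ^ 2 / (384 * (7 / 10) ^ 4) * (299 / 250)) * (v / N) ^ 2 := by
      field_simp
    _ ≤ 5 / 2 * (v / N) ^ 2 := by
      gcongr
      norm_num

theorem one_add_div_le (hw : 9 / 2 ≤ w) : (1 + w) / (w * Real.exp w) ≤ 1 / 73 := by
  rw [div_le_div_iff₀ (by positivity) (by norm_num)]
  nlinarith [one_add_sq_le_mul_exp hw]

theorem lowerRemainder_le (hw : 9 / 2 ≤ w) :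
    lowerRemainder (expMoment w) (5 / (4 * w)) ≤ 77 / 10 * ((1 + w) / (w * Real.exp w)) ^ 2 := by
  have hw0 : 0 < w := by linarith
  have h₃ := expMoment_le_of_touchard_le (touchard_three_le hw)
  have h₄ := expMoment_le_of_touchard_le (touchard_four_le hw)
  have h₆ := expMoment_le_of_touchard_le (touchard_six_le hw)
  have h₃' := expMoment_nonneg hw0.le 3
  have hsqrt := sqrt_ten_div_seven_le
  have hratio := one_add_div_le hw
  rw [lowerRemainder, expMoment_two]
  set N := w * Real.exp w
  have hN0 : 0 < N := by positivity
  set v := 1 + w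
  have hv0 : 0 < v := by positivity
  have hwv : w ≤ v := by linarith
  calc
    _ ≤ 79 / 25 * (N * v ^ 5) / (48 * (N * v) ^ 3) + 105 / ((5 / (4 * v)) ^ 8 * (N * v) ^ 4) +
        3465 * (737 / 500 * (N * v ^ 3)) / (8 * (5 / (4 * v)) ^ 8 * (N * v) ^ 6) +
        35 * (737 / 500 * (N * v ^ 3)) * (1149 / 1000 * (N * v ^ 2)) ^ 2 /
          (64 * (7 / 10 * (N * v)) ^ 5) * (299 / 250) := by
      gcongr
    _ = (79 / 25 / 48 + 105 * (4 / 5) ^ 8 * (v / N) ^ 2 +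
        3465 * (737 / 500) * (4 / 5) ^ 8 / 8 * (v / N) ^ 3 +
        35 * (737 / 500) * (1149 / 1000) ^ 2 / (64 * (7 / 10) ^ 5) * (299 / 250)) *
          (v / N) ^ 2 := by
      field_simp
    _ ≤ (79 / 25 / 48 + 105 * (4 / 5) ^ 8 * (1 / 73) ^ 2 +
        3465 * (737 / 500) * (4 / 5) ^ 8 / 8 * (1 / 73) ^ 3 +
        35 * (737 / 500) * (1149 / 1000) ^ 2 / (64 * (7 / 10) ^ 5) * (299 / 250)) *
          (v / N) ^ 2 := by
      gcongr
    _ ≤ 77 / 10 * (v / N) ^ 2 := by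
      gcongr
      norm_num

theorem one_add_div_sq_le (hw : 9 / 2 ≤ w) :
    ((1 + w) / (w * Real.exp w)) ^ 2 ≤ 50 / 669 / (w * Real.exp w) := by
  have hsq := one_add_sq_le_mul_exp hw
  rw [div_pow, div_div, div_le_div_iff₀ (by positivity) (by positivity)]
  nlinarith

theorem integral_saddleKernel_le (hw : 9 / 2 ≤ w) :
    ∫ t in -Real.pi..Real.pi, saddleKernel (w * Real.exp w) w t ≤
      (1 - 1 / (12 * (w * Real.exp w))) * √(2 * Real.pi / expMoment w 2) := by
  have hw0 : 0 < w := by linarith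
  refine (integral_saddleKernel_le_integral_upperEnvelope hw).trans ?_
  grw [integral_upperEnvelope (expMoment_two_pos hw0), two_pi_mul_exp_neg_le hw, ← add_mul]
  refine mul_le_mul_of_nonneg_right ?_ (Real.sqrt_nonneg _)
  have hbudget : -(49 / 100 / (w * Real.exp w)) + 5 / 2 * (50 / 669 / (w * Real.exp w)) +
      1 / 10 / (w * Real.exp w) ≤ -(1 / (12 * (w * Real.exp w))) := by
    field_simp
    norm_num
  linarith [saddleCorrection_le hw, upperRemainder_le hw, one_add_div_sq_le hw]

theorem le_integral_saddleKernel (hw : 9 / 2 ≤ w) :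
    (1 - (w + 3 / 2) / (5 * (w * Real.exp w))) * √(2 * Real.pi / expMoment w 2) ≤
      ∫ t in -Real.pi..Real.pi, saddleKernel (w * Real.exp w) w t := by
  have hw0 : 0 < w := by linarith
  refine le_trans ?_ (integral_lowerEnvelope_le_integral_saddleKernel hw)
  grw [integral_lowerEnvelope (expMoment_two_pos hw0), two_pi_mul_exp_neg_le hw, ← sub_mul]
  refine mul_le_mul_of_nonneg_right ?_ (Real.sqrt_nonneg _)
  have hbudget : -((w + 3 / 2) / (5 * (w * Real.exp w))) ≤
      -(((w + 3 / 2) / 5 - 17 / 25) / (w * Real.exp w)) -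
        77 / 10 * (50 / 669 / (w * Real.exp w)) - 1 / 10 / (w * Real.exp w) := by
    field_simp
    linarith
  linarith [le_saddleCorrection hw, lowerRemainder_le hw, one_add_div_sq_le hw]

end SaddlePointIntegral

section LargeArgument

variable {n : ℕ}

theorem Estar_eq_stirling_mul_gaussian (hn : n ≠ 0) :
    Estar n = √(2 * Real.pi * n) * (n / Real.exp 1) ^ n / lambertW n ^ n *
      Real.exp (Real.exp (lambertW n) - 1) / (2 * Real.pi) *
      √(2 * Real.pi / expMoment (lambertW n) 2) := by
  have hn0 : (0 : ℝ) < n := by positivity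
  have hw0 := lambertW_pos hn0
  have hN := lambertW_mul_exp hn0.le
  rw [Estar, expMoment_two, hN]
  generalize lambertW n = w at hw0 hN ⊢
  have hsqrt : √(2 * Real.pi * n) * √(2 * Real.pi / (n * (1 + w))) =
      2 * Real.pi / √(1 + w) := by
    rw [← Real.sqrt_mul (by positivity),
      show 2 * Real.pi * n * (2 * Real.pi / (n * (1 + w))) = (2 * Real.pi) ^ 2 / (1 + w) by
        field_simp,
      Real.sqrt_div (by positivity), Real.sqrt_sq (by positivity)]
  have hpow : (n / Real.exp 1) ^ n / w ^ n = Real.exp (n * w - n) := by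
    rw [← div_pow, show (n : ℝ) / Real.exp 1 / w = Real.exp (w - 1) by
      rw [← hN, Real.exp_sub]; field_simp, ← Real.exp_nat_mul, mul_sub_one]
  calc Real.exp (Real.exp w + n * w - (n + 1)) / √(1 + w)
      = Real.exp (n * w - n) * Real.exp (Real.exp w - 1) / (2 * Real.pi) *
          (2 * Real.pi / √(1 + w)) := by
        rw [← Real.exp_add]
        field_simp
        ring_nf
    _ = _ := by rw [← hsqrt, ← hpow]; ring

theorem nine_halves_le_lambertW (hn : 406 ≤ n) : 9 / 2 ≤ lambertW n := by
  have hn' : (406 : ℝ) ≤ n := by exact_mod_cast hn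
  refine le_lambertW (by linarith) ?_
  have hsq : Real.exp (9 / 2) ^ 2 = Real.exp 1 ^ 9 := by
    rw [← Real.exp_nat_mul, ← Real.exp_nat_mul]
    norm_num
  have hexp : Real.exp (9 / 2) ≤ 90.2 := by
    refine le_of_sq_le_sq ?_ (by norm_num)
    calc Real.exp (9 / 2) ^ 2 ≤ 2.7182818286 ^ 9 := by
          rw [hsq]
          gcongr
          exact Real.exp_one_lt_d9.le
      _ ≤ 90.2 ^ 2 := by norm_num
  linarith

theorem three_halves_le_log {w : ℝ} (hw : 9 / 2 ≤ w) : 3 / 2 ≤ Real.log w := by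
  have hsq : Real.exp (3 / 2) ^ 2 = Real.exp 1 ^ 3 := by
    rw [← Real.exp_nat_mul, ← Real.exp_nat_mul]
    norm_num
  rw [Real.le_log_iff_exp_le (by linarith)]
  refine le_trans (le_of_sq_le_sq ?_ (by norm_num)) hw
  calc Real.exp (3 / 2) ^ 2 ≤ 2.7182818286 ^ 3 := by
        rw [hsq]
        gcongr
        exact Real.exp_one_lt_d9.le
    _ ≤ (9 / 2) ^ 2 := by norm_num

theorem Bell_le_Estar_of_le_lambertW (hn : n ≠ 0) (hw : 9 / 2 ≤ lambertW n) :
    (Bell n : ℝ) ≤ Estar n := by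
  have hn0 : (0 : ℝ) < n := by positivity
  have hw0 := lambertW_pos hn0
  have hint := integral_saddleKernel_le hw
  have hfact := factorial_le_stirling_mul_exp hn
  rw [lambertW_mul_exp hn0.le] at hint
  rw [Bell_eq_integral_saddleKernel hw0, Estar_eq_stirling_mul_gaussian hn]
  generalize lambertW n = w at hint hw0 ⊢
  set s := √(2 * Real.pi * n) * (n / Real.exp 1) ^ n
  set Z := √(2 * Real.pi / expMoment w 2)
  set c := Real.exp (Real.exp w - 1) / (2 * Real.pi) / w ^ n
  have hexp : 1 - 1 / (12 * (n : ℝ)) ≤ Real.exp (-(1 / (12 * n))) := Real.one_sub_le_exp_neg _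
  calc
    _ = c * (n.factorial * ∫ t in -Real.pi..Real.pi, saddleKernel n w t) := by ring
    _ ≤ c * (n.factorial * (Real.exp (-(1 / (12 * n))) * Z)) := by
      gcongr
      exact hint.trans (by gcongr)
    _ ≤ c * (s * Real.exp (1 / (12 * n)) * (Real.exp (-(1 / (12 * n))) * Z)) := by gcongr
    _ = c * (s * Z) * (Real.exp (1 / (12 * n)) * Real.exp (-(1 / (12 * n)))) := by ring
    _ = _ := by
      rw [← Real.exp_add, add_neg_cancel, Real.exp_zero]
      ring

theorem mul_Estar_le_Bell_of_le_lambertW (hn : n ≠ 0) (hw : 9 / 2 ≤ lambertW n) :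
    (1 - Real.log n / (5 * n)) * Estar n ≤ Bell n := by
  have hn0 : (0 : ℝ) < n := by positivity
  have hw0 := lambertW_pos hn0
  have hint := le_integral_saddleKernel hw
  have hlog : lambertW n + 3 / 2 ≤ Real.log n := by
    linarith [log_eq_lambertW_add_log hn0, three_halves_le_log hw]
  have hlog' : Real.log n / (5 * n) ≤ 1 := by
    rw [div_le_one (by positivity)]
    linarith [Real.log_le_self hn0.le]
  rw [lambertW_mul_exp hn0.le] at hint
  rw [Bell_eq_integral_saddleKernel hw0, Estar_eq_stirling_mul_gaussian hn]
  generalize lambertW n = w at hint hw0 hlog ⊢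
  set s := √(2 * Real.pi * n) * (n / Real.exp 1) ^ n
  set Z := √(2 * Real.pi / expMoment w 2)
  set c := Real.exp (Real.exp w - 1) / (2 * Real.pi) / w ^ n
  calc
    _ = c * (s * ((1 - Real.log n / (5 * n)) * Z)) := by ring
    _ ≤ c * (n.factorial * ((1 - Real.log n / (5 * n)) * Z)) := by
      have := sub_nonneg.2 hlog'
      gcongr
      exact Stirling.le_factorial_stirling n
    _ ≤ c * (n.factorial * ∫ t in -Real.pi..Real.pi, saddleKernel n w t) := by
      gcongr
      exact le_trans (by gcongr) hint
    _ = _ := by ring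

end LargeArgument

section BellTriangle

/-- The entries of the Bell triangle: `bellTriangle m k` is the `k`-th binomial transform of the
Bell numbers shifted by `m`. -/
def bellTriangle (m k : ℕ) : ℕ := ∑ j ∈ Finset.range (k + 1), k.choose j * Bell (m + j)

theorem bellTriangle_zero_right (m : ℕ) : bellTriangle m 0 = Bell m := by simp [bellTriangle]

theorem bellTriangle_zero_left (k : ℕ) : bellTriangle 0 k = Bell (k + 1) := by
  simp [bellTriangle, Bell_succ]

theorem bellTriangle_succ (m k : ℕ) :
    bellTriangle m (k + 1) = bellTriangle m k + bellTriangle (m + 1) k := by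
  unfold bellTriangle
  rw [Finset.sum_range_succ', Finset.sum_range_succ' (fun j ↦ k.choose j * Bell (m + j)) k]
  simp only [Nat.choose_succ_succ, add_mul, Finset.sum_add_distrib]
  rw [Finset.sum_range_succ fun j ↦ k.choose (j + 1) * Bell (m + (j + 1))]
  simp only [Nat.choose_succ_self, zero_mul, add_zero, Nat.choose_zero_right, one_mul,
    ← add_assoc, add_right_comm m 1]
  ring

/-- The antidiagonal `[bellTriangle m k, bellTriangle (m + 1) (k - 1), …, bellTriangle (m + k) 0]`
of the Bell triangle. -/
def bellAntidiagonal : ℕ → ℕ → List ℕ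
  | m, 0 => [bellTriangle m 0]
  | m, k + 1 => bellTriangle m (k + 1) :: bellAntidiagonal (m + 1) k

theorem bellAntidiagonal_eq_cons (m k : ℕ) :
    ∃ t, bellAntidiagonal m k = bellTriangle m k :: t := by
  cases k <;> exact ⟨_, rfl⟩

/-- Function application that makes the kernel evaluate the argument to a numeral first, so that
repeated occurrences of the argument do not repeat its computation. -/
def strictApply {α : Type*} (f : ℕ → α) : ℕ → α
  | 0 => f 0
  | n + 1 => f (n + 1)

@[simp]
theorem strictApply_eq {α : Type*} (f : ℕ → α) (n : ℕ) : strictApply f n = f n := by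
  cases n <;> rfl

/-- The sums of the suffixes of a list, each increased by `b`, ending with `b` itself. -/
def suffixSums (b : ℕ) : List ℕ → List ℕ
  | [] => [b]
  | x :: xs =>
    match suffixSums b xs with
    | [] => []
    | s :: t => strictApply (fun y ↦ y :: s :: t) (x + s)

theorem suffixSums_bellAntidiagonal (m k : ℕ) :
    suffixSums (Bell (m + k + 1)) (bellAntidiagonal m k) = bellAntidiagonal m (k + 1) := by
  induction k generalizing m with
  | zero =>
    simp [suffixSums, bellAntidiagonal, bellTriangle_succ m 0, bellTriangle_zero_right]
  | succ k ih =>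
    obtain ⟨t, ht⟩ := bellAntidiagonal_eq_cons (m + 1) (k + 1)
    have htail := ih (m + 1)
    rw [ht, show m + 1 + k + 1 = m + (k + 1) + 1 by ring] at htail
    rw [bellAntidiagonal, bellAntidiagonal, ht]
    simp [suffixSums, htail, bellTriangle_succ m (k + 1)]

/-- Starting from `row = bellAntidiagonal 0 m`, checks `p (m + 1) (Bell (m + 1))`,
`p (m + 2) (Bell (m + 2))`, … for as many successive Bell numbers as the first argument says. -/
def checkBell (p : ℕ → ℕ → Bool) : ℕ → ℕ → List ℕ → Bool
  | 0, _, _ => true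
  | _ + 1, _, [] => false
  | fuel + 1, m, b :: t =>
    p (m + 1) b && strictApply (fun m' ↦ checkBell p fuel m' (suffixSums b (b :: t))) (m + 1)

theorem checkBell_sound {p : ℕ → ℕ → Bool} {fuel m : ℕ}
    (h : checkBell p fuel m (bellAntidiagonal 0 m) = true) {n : ℕ} (hmn : m < n)
    (hn : n ≤ m + fuel) : p n (Bell n) = true := by
  induction fuel generalizing m with
  | zero => omega
  | succ fuel ih =>
    obtain ⟨t, ht⟩ := bellAntidiagonal_eq_cons 0 m
    have hnext := suffixSums_bellAntidiagonal 0 m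
    rw [ht, bellTriangle_zero_left, zero_add] at hnext
    rw [ht, bellTriangle_zero_left, checkBell, strictApply_eq, hnext, Bool.and_eq_true] at h
    rcases (Nat.succ_le_of_lt hmn).eq_or_lt with rfl | hlt
    · exact h.1
    · exact ih h.2 hlt (by omega)

end BellTriangle

section FixedPoint

variable {S K x : ℕ}

/-- A lower bound for `S * exp (x / S)` in integer arithmetic, from `1 + y ≤ exp y` at
`y = x / (2 ^ K * S)` followed by `K` squarings. -/
def expLower (S K x : ℕ) : ℕ := (fun L ↦ L ^ 2 / S)^[K] (S + x / 2 ^ K)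

/-- An upper bound for `S * exp (x / S)` in integer arithmetic, from `exp y ≤ 1 / (1 - y)` at
`y = x / (2 ^ K * S)` followed by `K` squarings; meaningful when `x / 2 ^ K + 1 < S`. -/
def expUpper (S K x : ℕ) : ℕ :=
  (fun L ↦ L ^ 2 / S + 1)^[K] (S ^ 2 / (S - (x / 2 ^ K + 1)) + 1)

theorem cast_div_cast_le (m k : ℕ) : (m : ℝ) / k ≤ (m / k : ℕ) + 1 := by
  rw [← Nat.floor_div_eq_div (K := ℝ)]
  exact (Nat.lt_floor_add_one _).le

theorem iterate_sq_div_le (hS : 0 < S) {L : ℕ} {y : ℝ} (h : (L : ℝ) ≤ S * Real.exp y) :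
    (((fun L ↦ L ^ 2 / S)^[K] L : ℕ) : ℝ) ≤ S * Real.exp (2 ^ K * y) := by
  induction K generalizing L y with
  | zero => simpa using h
  | succ K ih =>
    have hstep : ((L ^ 2 / S : ℕ) : ℝ) ≤ S * Real.exp (2 * y) :=
      calc ((L ^ 2 / S : ℕ) : ℝ) ≤ (L : ℝ) ^ 2 / S := by exact_mod_cast Nat.cast_div_le
        _ ≤ (S * Real.exp y) ^ 2 / S := by gcongr
        _ = S * Real.exp (2 * y) := by
          rw [mul_pow, ← Real.exp_nat_mul]; field_simp; push_cast; rw [mul_comm]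
    simpa [pow_succ, mul_assoc] using ih hstep

theorem le_iterate_sq_div_add_one (hS : 0 < S) {L : ℕ} {y : ℝ} (h : S * Real.exp y ≤ L) :
    S * Real.exp (2 ^ K * y) ≤ (((fun L ↦ L ^ 2 / S + 1)^[K] L : ℕ) : ℝ) := by
  induction K generalizing L y with
  | zero => simpa using h
  | succ K ih =>
    have hstep : S * Real.exp (2 * y) ≤ ((L ^ 2 / S + 1 : ℕ) : ℝ) :=
      calc S * Real.exp (2 * y) = (S * Real.exp y) ^ 2 / S := by
            rw [mul_pow, ← Real.exp_nat_mul]; field_simp; push_cast; rw [mul_comm]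
        _ ≤ (L : ℝ) ^ 2 / S := by gcongr
        _ ≤ ((L ^ 2 / S + 1 : ℕ) : ℝ) := by exact_mod_cast cast_div_cast_le (L ^ 2) S
    simpa [pow_succ, mul_assoc] using ih hstep

theorem expLower_le (hS : 0 < S) : (expLower S K x : ℝ) ≤ S * Real.exp (x / S) := by
  have hstart : ((S + x / 2 ^ K : ℕ) : ℝ) ≤ S * Real.exp (x / S / 2 ^ K) :=
    calc ((S + x / 2 ^ K : ℕ) : ℝ) ≤ S + (x : ℝ) / 2 ^ K := by
          push_cast; gcongr; exact_mod_cast Nat.cast_div_le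
      _ = S * (x / S / 2 ^ K + 1) := by field_simp; ring
      _ ≤ S * Real.exp (x / S / 2 ^ K) := by gcongr; exact Real.add_one_le_exp _
  have hiter := iterate_sq_div_le (K := K) hS hstart
  rwa [mul_div_cancel₀ _ (by positivity)] at hiter

theorem le_expUpper (hx : x / 2 ^ K + 1 < S) : S * Real.exp (x / S) ≤ expUpper S K x := by
  have hS' : (0 : ℝ) < S := by exact_mod_cast (Nat.zero_le _).trans_lt hx
  have hdiv : (x : ℝ) / 2 ^ K ≤ (x / 2 ^ K + 1 : ℕ) := by exact_mod_cast cast_div_cast_le x (2 ^ K)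
  have hlt : ((x / 2 ^ K + 1 : ℕ) : ℝ) < S := by exact_mod_cast hx
  have hexp : Real.exp (x / S / 2 ^ K) ≤ S / (S - (x / 2 ^ K + 1 : ℕ)) := by
    have hneg : (S - (x / 2 ^ K + 1 : ℕ)) / S ≤ Real.exp (-(x / S / 2 ^ K)) :=
      calc (S - (x / 2 ^ K + 1 : ℕ)) / (S : ℝ) ≤ (S - x / 2 ^ K) / S := by gcongr
        _ = -(x / S / 2 ^ K) + 1 := by field_simp; ring
        _ ≤ _ := Real.add_one_le_exp _
    rw [Real.exp_neg, le_inv_comm₀ (div_pos (sub_pos.2 hlt) hS') (Real.exp_pos _), inv_div] at hneg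
    exact hneg
  have hstart : S * Real.exp (x / S / 2 ^ K) ≤ (S ^ 2 / (S - (x / 2 ^ K + 1)) + 1 : ℕ) :=
    calc S * Real.exp (x / S / 2 ^ K) ≤ S * (S / (S - (x / 2 ^ K + 1 : ℕ))) := by gcongr
      _ = ((S ^ 2 : ℕ) : ℝ) / (S - (x / 2 ^ K + 1) : ℕ) := by
        rw [Nat.cast_sub hx.le]; push_cast; ring
      _ ≤ _ := by exact_mod_cast cast_div_cast_le _ _
  have hiter := le_iterate_sq_div_add_one (K := K) (Nat.zero_lt_of_lt hx) hstart
  rwa [mul_div_cancel₀ _ (by positivity)] at hiter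

end FixedPoint

section SmallCases

variable {n : ℕ}

theorem le_Estar_of_lambertW_mem_Icc (hn : 0 < n) {a b c : ℝ} (ha : a ≤ lambertW n)
    (hb : lambertW n ≤ b) (h : c ^ 2 * (1 + b) ≤ Real.exp (n / b + n * a - (n + 1)) ^ 2) :
    c ≤ Estar n := by
  have hn' : (0 : ℝ) < n := by exact_mod_cast hn
  have hW := lambertW_pos hn'
  rw [Estar, exp_lambertW hn', le_div_iff₀ (by positivity)]
  refine le_of_sq_le_sq ?_ (Real.exp_pos _).le
  calc (c * √(1 + lambertW n)) ^ 2 = c ^ 2 * (1 + lambertW n) := by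
        rw [mul_pow, Real.sq_sqrt (by positivity)]
    _ ≤ c ^ 2 * (1 + b) := by gcongr
    _ ≤ _ := h
    _ ≤ _ := by gcongr

theorem mul_Estar_le_of_lambertW_mem_Icc (hn : 0 < n) {a b c d : ℝ} (ha₀ : 0 < a)
    (ha : a ≤ lambertW n) (hb : lambertW n ≤ b) (hc : 0 ≤ c)
    (h : (d * Real.exp (n / a + n * b - (n + 1))) ^ 2 ≤ c ^ 2 * (1 + a)) :
    d * Estar n ≤ c := by
  have hn' : (0 : ℝ) < n := by exact_mod_cast hn
  have hW := lambertW_pos hn'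
  rw [Estar, exp_lambertW hn', mul_div_assoc', div_le_iff₀ (by positivity)]
  refine le_of_sq_le_sq ?_ (by positivity)
  calc (d * Real.exp (n / lambertW n + n * lambertW n - (n + 1))) ^ 2
      ≤ (d * Real.exp (n / a + n * b - (n + 1))) ^ 2 := by
        rw [mul_pow, mul_pow]; gcongr
    _ ≤ c ^ 2 * (1 + a) := h
    _ ≤ c ^ 2 * (1 + lambertW n) := by gcongr
    _ = (c * √(1 + lambertW n)) ^ 2 := by rw [mul_pow, Real.sq_sqrt (by positivity)]

/-- A certificate, in integer arithmetic at scale `S` and with `K` squarings for each exponential,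
of the two bounds for a candidate value `B` of the `n`-th Bell number. It certifies first that
`a / S ≤ lambertW n ≤ b / S`. As `exp (lambertW n) = n / lambertW n`, this brackets the exponent in
`Estar n`, and the bounds are compared after squaring, with `3 / 4 * lambertW n` in place of
`log n`. -/
structure BellCertificate (S K n B a b : ℕ) : Prop where
  pos_left : 0 < a
  lt_scale_left : a / 2 ^ K + 1 < S
  bracket_left : a * expUpper S K a ≤ n * S ^ 2
  bracket_right : n * S ^ 2 ≤ b * expLower S K b
  exponent_nonneg : (n + 1) * S ≤ n * S ^ 2 / b + n * a
  upper : B ^ 2 * (S + b) * S ≤ expLower S K (n * S ^ 2 / b + n * a - (n + 1) * S) ^ 2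
  lt_scale_right : (n * S ^ 2 / a + 1 + n * b - (n + 1) * S) / 2 ^ K + 1 < S
  lower : ((20 * n * S - 3 * a) * expUpper S K (n * S ^ 2 / a + 1 + n * b - (n + 1) * S)) ^ 2 ≤
    (20 * n * B) ^ 2 * (S + a) * S ^ 3

instance (S K n B a b : ℕ) : Decidable (BellCertificate S K n B a b) :=
  decidable_of_iff
    (0 < a ∧ a / 2 ^ K + 1 < S ∧ a * expUpper S K a ≤ n * S ^ 2 ∧
      n * S ^ 2 ≤ b * expLower S K b ∧ (n + 1) * S ≤ n * S ^ 2 / b + n * a ∧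
      B ^ 2 * (S + b) * S ≤ expLower S K (n * S ^ 2 / b + n * a - (n + 1) * S) ^ 2 ∧
      (n * S ^ 2 / a + 1 + n * b - (n + 1) * S) / 2 ^ K + 1 < S ∧
      ((20 * n * S - 3 * a) * expUpper S K (n * S ^ 2 / a + 1 + n * b - (n + 1) * S)) ^ 2 ≤
        (20 * n * B) ^ 2 * (S + a) * S ^ 3)
    ⟨fun ⟨h₁, h₂, h₃, h₄, h₅, h₆, h₇, h₈⟩ ↦ ⟨h₁, h₂, h₃, h₄, h₅, h₆, h₇, h₈⟩,
      fun ⟨h₁, h₂, h₃, h₄, h₅, h₆, h₇, h₈⟩ ↦ ⟨h₁, h₂, h₃, h₄, h₅, h₆, h₇, h₈⟩⟩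

namespace BellCertificate

variable {S K B a b : ℕ}

theorem scale_pos (h : BellCertificate S K n B a b) : (0 : ℝ) < S := by
  exact_mod_cast (Nat.zero_le _).trans_lt h.lt_scale_left

theorem div_le_lambertW (h : BellCertificate S K n B a b) (hn : 0 < n) :
    (a : ℝ) / S ≤ lambertW n := by
  have hS := h.scale_pos
  have hexp := le_expUpper h.lt_scale_left
  have hbracket : (a : ℝ) * expUpper S K a ≤ n * S ^ 2 := by exact_mod_cast h.bracket_left
  refine le_lambertW (by exact_mod_cast hn) ?_
  calc (a : ℝ) / S * Real.exp (a / S) = a * (S * Real.exp (a / S)) / S ^ 2 := by field_simp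
    _ ≤ a * expUpper S K a / S ^ 2 := by gcongr
    _ ≤ n := by rwa [div_le_iff₀ (by positivity)]

theorem lambertW_le_div (h : BellCertificate S K n B a b) : lambertW n ≤ (b : ℝ) / S := by
  have hS := h.scale_pos
  have hexp : (expLower S K b : ℝ) ≤ S * Real.exp (b / S) := expLower_le (by exact_mod_cast hS)
  have hbracket : (n : ℝ) * S ^ 2 ≤ b * expLower S K b := by exact_mod_cast h.bracket_right
  refine lambertW_le (Nat.cast_nonneg n) (by positivity) ?_
  calc (n : ℝ) ≤ b * expLower S K b / S ^ 2 := by rwa [le_div_iff₀ (by positivity)]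
    _ ≤ b * (S * Real.exp (b / S)) / S ^ 2 := by gcongr
    _ = b / S * Real.exp (b / S) := by field_simp

theorem le_Estar (h : BellCertificate S K n B a b) (hn : 0 < n) : (B : ℝ) ≤ Estar n := by
  have hS := h.scale_pos
  refine le_Estar_of_lambertW_mem_Icc hn (h.div_le_lambertW hn) h.lambertW_le_div ?_
  set z := n * S ^ 2 / b + n * a - (n + 1) * S with hz
  have hexponent : (z : ℝ) / S ≤ n / (b / S) + n * (a / S) - (n + 1) :=
    calc (z : ℝ) / S = ((n * S ^ 2 / b : ℕ) + n * a - (n + 1) * S) / S := by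
          rw [hz, Nat.cast_sub h.exponent_nonneg]; push_cast; ring
      _ ≤ (n * S ^ 2 / b + n * a - (n + 1) * S) / S := by
          gcongr; exact_mod_cast Nat.cast_div_le
      _ = n / (b / S) + n * (a / S) - (n + 1) := by field_simp
  have hexp : (expLower S K z : ℝ) ≤ S * Real.exp (z / S) := expLower_le (by exact_mod_cast hS)
  have hupper : (B : ℝ) ^ 2 * (S + b) * S ≤ expLower S K z ^ 2 := by exact_mod_cast h.upper
  calc (B : ℝ) ^ 2 * (1 + b / S) = B ^ 2 * (S + b) * S / S ^ 2 := by field_simp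
    _ ≤ (expLower S K z : ℝ) ^ 2 / S ^ 2 := by gcongr
    _ ≤ (S * Real.exp (z / S)) ^ 2 / S ^ 2 := by gcongr
    _ = Real.exp (z / S) ^ 2 := by field_simp
    _ ≤ _ := by gcongr

theorem one_sub_log_div_le (h : BellCertificate S K n B a b) (hn : 2 ≤ n) :
    1 - Real.log n / (5 * n) ≤ ((20 * n * S - 3 * a : ℕ) : ℝ) / (20 * n * S) := by
  have hS := h.scale_pos
  have hn' : (2 : ℝ) ≤ n := by exact_mod_cast hn
  have hleft := h.div_le_lambertW (by omega)
  have hlog : 3 / 4 * (a / S) ≤ Real.log n := by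
    linarith [three_fourths_mul_lambertW_le_log hn']
  have hsub : (20 * n * S - 3 * a : ℝ) ≤ (20 * n * S - 3 * a : ℕ) := by
    rw [sub_le_iff_le_add]
    exact_mod_cast Nat.sub_le_iff_le_add.1 le_rfl
  calc 1 - Real.log n / (5 * n) ≤ 1 - 3 / 4 * (a / S) / (5 * n) := by gcongr
    _ = (20 * n * S - 3 * a) / (20 * n * S) := by field_simp; ring
    _ ≤ _ := by gcongr

theorem mul_Estar_le (h : BellCertificate S K n B a b) (hn : 2 ≤ n) :
    (1 - Real.log n / (5 * n)) * Estar n ≤ B := by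
  have hS := h.scale_pos
  have ha : (0 : ℝ) < a := by exact_mod_cast h.pos_left
  have hEstar : 0 ≤ Estar n := by unfold Estar; positivity
  refine (mul_le_mul_of_nonneg_right (h.one_sub_log_div_le hn) hEstar).trans ?_
  refine mul_Estar_le_of_lambertW_mem_Icc (by omega) (by positivity)
    (h.div_le_lambertW (by omega)) h.lambertW_le_div (Nat.cast_nonneg B) ?_
  set d := 20 * n * S - 3 * a
  set y := n * S ^ 2 / a + 1 + n * b - (n + 1) * S
  have hexponent : n / (a / S) + n * (b / S) - (n + 1) ≤ (y : ℝ) / S :=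
    calc n / (a / S) + n * (b / S) - (n + 1 : ℝ)
        = (((n * S ^ 2 : ℕ) : ℝ) / a + n * b - (n + 1) * S) / S := by push_cast; field_simp
      _ ≤ (((n * S ^ 2 / a : ℕ) : ℝ) + 1 + n * b - (n + 1) * S) / S := by
        gcongr; exact cast_div_cast_le _ _
      _ ≤ (y : ℝ) / S := by
        gcongr
        rw [sub_le_iff_le_add]
        exact_mod_cast Nat.sub_le_iff_le_add.1 le_rfl
  have hexp : S * Real.exp (y / S) ≤ expUpper S K y := le_expUpper h.lt_scale_right
  have hlower : (d * expUpper S K y : ℝ) ^ 2 ≤ (20 * n * B) ^ 2 * (S + a) * S ^ 3 := by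
    exact_mod_cast h.lower
  calc (d / (20 * n * S) * Real.exp (n / (a / S) + n * (b / S) - (n + 1))) ^ 2
      ≤ (d / (20 * n * S) * Real.exp (y / S)) ^ 2 := by gcongr
    _ = (d * (S * Real.exp (y / S))) ^ 2 / (20 * n * S ^ 2) ^ 2 := by field_simp
    _ ≤ (d * expUpper S K y) ^ 2 / (20 * n * S ^ 2) ^ 2 := by gcongr
    _ ≤ (20 * n * B) ^ 2 * (S + a) * S ^ 3 / (20 * n * S ^ 2) ^ 2 := by gcongr
    _ = B ^ 2 * (1 + a / S) := by field_simp

end BellCertificate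

/-- One step of Newton's method for `y * exp y = n`, at scale `S`. -/
def newtonStep (S K n w : ℕ) : ℕ := (w ^ 2 + n * S ^ 3 / expLower S K w) / (S + w)

/-- Tries to certify that the bounds hold for a candidate value `B` of the `n`-th Bell number, with
four Newton steps for `lambertW n` and the tolerance `2 ^ (-28)` about the result. -/
def certifyBell (S K n B : ℕ) : Bool :=
  strictApply (fun w ↦ decide (BellCertificate S K n B (w - S / 2 ^ 28) (w + S / 2 ^ 28)))
    ((strictApply (newtonStep S K n))^[4] ((n.log2 + 1) * S / 2))

theorem checkBell_certifyBell : checkBell (certifyBell (2 ^ 96) 40) 404 1 [2, 1] = true := by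
  decide +kernel

theorem Bell_bounds_of_le_405 (hn : 2 ≤ n) (hn' : n ≤ 405) :
    (1 - Real.log n / (5 * n)) * Estar n ≤ Bell n ∧ (Bell n : ℝ) ≤ Estar n := by
  have hstart : bellAntidiagonal 0 1 = [2, 1] := by
    simp [bellAntidiagonal, bellTriangle, Bell_succ, Bell, Finset.sum_range_succ]
  have hcheck := checkBell_sound (hstart ▸ checkBell_certifyBell) hn (by omega)
  rw [certifyBell, strictApply_eq, decide_eq_true_eq] at hcheck
  exact ⟨hcheck.mul_Estar_le hn, hcheck.le_Estar (by omega)⟩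

end SmallCases

theorem stmt_6 (n : ℕ) (hn : 2 ≤ n) :
    (1 - Real.log n / (5 * (n : ℝ))) * Estar n ≤ (Bell n : ℝ) ∧ (Bell n : ℝ) ≤ Estar n := by
  rcases le_or_gt n 405 with hsmall | hlarge
  · exact Bell_bounds_of_le_405 hn hsmall
  · have hw := nine_halves_le_lambertW hlarge
    exact ⟨mul_Estar_le_Bell_of_le_lambertW (by omega) hw,
      Bell_le_Estar_of_le_lambertW (by omega) hw⟩
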